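/- arXiv:1309.4620 — 2 statements merged into one kernel-verified Lean document; each statement's English description precedes it below -/
import Mathlib

section
/- Let A be a Noetherian complete local domain. Then the integral closure Ā of A in its field of fractions is a finite A-module, and Ā is itself a Noetherian local domain which is complete with respect to the adic topology of its maximal ideal. -/
set_option synthInstance.maxHeartbeats 1000000
set_option maxHeartbeats 1000000

set_option linter.all false
set_option linter.unusedSectionVars false
set_option linter.style.haveILetI false

noncomputable section

namespace MN
open IsLocalRing

/-- A finite module killed by a power of the maximal ideal is Artinian. -/
lemma isArtinian_of_pow_smul {R M : Type*} [CommRing R] [IsNoetherianRing R] [IsLocalRing R]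
    [AddCommGroup M] [Module R M] [Module.Finite R M] (k : ℕ)
    (h : ∀ a ∈ maximalIdeal R ^ k, ∀ y : M, a • y = 0) : IsArtinian R M := by
  rcases Nat.eq_zero_or_pos k with rfl | hk
  · have : Subsingleton M := by
      refine subsingleton_of_forall_eq 0 fun y => ?_
      have := h 1 (by simp) y
      simpa using this
    infer_instance
  let I := maximalIdeal R ^ k
  have hI : I ≠ ⊤ := by
    intro h
    have : I ≤ maximalIdeal R := Ideal.pow_le_self (by omega)
    rw [h, top_le_iff] at this
    exact (IsLocalRing.maximalIdeal.isMaximal R).ne_top this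
  have : Nontrivial (R ⧸ I) := Ideal.Quotient.nontrivial_iff.mpr hI
  have : IsLocalRing (R ⧸ I) := IsLocalRing.of_surjective' (Ideal.Quotient.mk I)
    Ideal.Quotient.mk_surjective
  have hA : IsArtinianRing (R ⧸ I) := by
    rw [isArtinianRing_iff_isNilpotent_maximalIdeal]
    refine ⟨k, ?_⟩
    have hm : maximalIdeal (R ⧸ I) ≤ (maximalIdeal R).map (Ideal.Quotient.mk I) := by
      intro y hy
      obtain ⟨r, rfl⟩ := Ideal.Quotient.mk_surjective y
      refine Ideal.mem_map_of_mem _ ((mem_maximalIdeal _).mpr fun hr => ?_)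
      exact (mem_maximalIdeal _).mp hy (IsUnit.map (Ideal.Quotient.mk I) hr)
    have h2 := Ideal.pow_right_mono hm k
    rw [← Ideal.map_pow, Ideal.map_quotient_self] at h2
    exact le_bot_iff.mp h2
  have ht : Module.IsTorsionBySet R M (I : Set R) := by
    rintro y ⟨a, ha⟩
    exact h a ha y
  letI := ht.module
  haveI : IsScalarTower R (R ⧸ I) M := ht.isScalarTower
  haveI : Module.Finite (R ⧸ I) M := Module.Finite.of_restrictScalars_finite R _ _
  have : IsArtinian (R ⧸ I) M := inferInstance
  exact isArtinian_of_surjective_algebraMap (Ideal.Quotient.mk_surjective (I := I))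

section
variable {R K : Type*} [CommRing R] [IsDomain R] [IsNoetherianRing R] [IsLocalRing R]
  [Field K] [Algebra R K] [IsFractionRing R K]

/-- `c` is killed modulo `R` by a power of the maximal ideal of `R`. -/
def IsTr (R : Type*) {K : Type*} [CommRing R] [IsLocalRing R] [Field K] [Algebra R K] (c : K) :
    Prop :=
  ∃ k : ℕ, ∀ a ∈ maximalIdeal R ^ k, ∃ r : R, algebraMap R K a * c = algebraMap R K r

lemma IsTr.algebraMap (r : R) : IsTr R (algebraMap R K r) :=
  ⟨0, fun a _ => ⟨a * r, by simp⟩⟩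

lemma IsTr.add {b c : K} (hb : IsTr R b) (hc : IsTr R c) : IsTr R (b + c) := by
  obtain ⟨k, hk⟩ := hb
  obtain ⟨l, hl⟩ := hc
  refine ⟨max k l, fun a ha => ?_⟩
  obtain ⟨r, hr⟩ := hk a (Ideal.pow_le_pow_right (le_max_left _ _) ha)
  obtain ⟨s, hs⟩ := hl a (Ideal.pow_le_pow_right (le_max_right _ _) ha)
  exact ⟨r + s, by rw [mul_add, hr, hs, map_add]⟩

lemma IsTr.mul {b c : K} (hb : IsTr R b) (hc : IsTr R c) : IsTr R (b * c) := by
  obtain ⟨k, hk⟩ := hb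
  obtain ⟨l, hl⟩ := hc
  refine ⟨k + l, fun a ha => ?_⟩
  rw [pow_add] at ha
  induction ha using Submodule.mul_induction_on' with
  | mem_mul_mem m hm n hn =>
    obtain ⟨r, hr⟩ := hk m hm
    obtain ⟨s, hs⟩ := hl n hn
    exact ⟨r * s, by rw [map_mul, map_mul, ← hr, ← hs]; ring⟩
  | add x _ y _ hx hy =>
    obtain ⟨r, hr⟩ := hx
    obtain ⟨s, hs⟩ := hy
    exact ⟨r + s, by rw [map_add, add_mul, hr, hs, map_add]⟩

lemma matijevic_aux (C : Subalgebra R K) (hC : ∀ c ∈ C, IsTr R c) {x : R}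
    (hx : x ∈ maximalIdeal R) (hx0 : x ≠ 0) :
    ∃ n : ℕ, ∀ b ∈ C, ∃ r : R, ∃ b' ∈ C,
      b * algebraMap R K x ^ n = algebraMap R K r + algebraMap R K x ^ (n + 1) * b' := by
  have hX : algebraMap R K x ≠ 0 := by
    rwa [Ne, FaithfulSMul.algebraMap_eq_zero_iff]
  set X := algebraMap R K x with hXdef
  let J : ℕ → Ideal R := fun n =>
    { carrier := {a | ∃ c ∈ C, algebraMap R K a = X ^ n * c}
      zero_mem' := ⟨0, C.zero_mem, by simp⟩
      add_mem' := by
        rintro a b ⟨c, hc, h⟩ ⟨d, hd, h'⟩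
        exact ⟨c + d, C.add_mem hc hd, by rw [map_add, h, h']; ring⟩
      smul_mem' := by
        rintro r a ⟨c, hc, h⟩
        exact ⟨algebraMap R K r * c, C.mul_mem (C.algebraMap_mem r) hc, by
          rw [smul_eq_mul, map_mul, h]; ring⟩ }
  have hJmem : ∀ n a, a ∈ J n ↔ ∃ c ∈ C, algebraMap R K a = X ^ n * c := fun _ _ => Iff.rfl
  have hJs : ∀ n, J (n + 1) ≤ J n := by
    rintro n a ⟨c, hc, h⟩
    exact ⟨X * c, C.mul_mem (C.algebraMap_mem x) hc, by rw [h]; ring⟩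
  have hJanti : Antitone J := antitone_nat_of_succ_le hJs
  let Q := R ⧸ Ideal.span {x}
  let q : R →ₗ[R] Q := (Ideal.span {x}).mkQ
  let M : ℕ → Submodule R Q := fun n => Submodule.map q (J n)
  have hManti : Antitone M := fun a b h => Submodule.map_mono (hJanti h)
  -- `M 1` is Artinian
  have hk : ∃ k : ℕ, ∀ a ∈ maximalIdeal R ^ k, ∀ y : M 1, a • y = 0 := by
    -- the annihilating ideals
    obtain ⟨S, hS⟩ := (isNoetherian_def.mp ‹IsNoetherianRing R›) (J 1)
    have h1 : ∀ s : R, s ∈ J 1 → ∃ k : ℕ, ∀ a ∈ maximalIdeal R ^ k, a * s ∈ Ideal.span {x} := by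
      rintro s ⟨c, hc, h⟩
      obtain ⟨k, hk⟩ := hC c hc
      refine ⟨k, fun a ha => ?_⟩
      obtain ⟨r, hr⟩ := hk a ha
      rw [Ideal.mem_span_singleton]
      refine ⟨r, IsFractionRing.injective R K ?_⟩
      rw [map_mul, map_mul, h, ← hr]; ring
    have h2 : ∀ s : S, ∃ k : ℕ, ∀ a ∈ maximalIdeal R ^ k, a * s ∈ Ideal.span {x} :=
      fun s => h1 s (by rw [← hS]; exact Ideal.subset_span s.2)
    choose k hk using h2
    refine ⟨Finset.univ.sup k, fun a ha => ?_⟩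
    have h3 : J 1 ≤ Submodule.comap (LinearMap.mulLeft R a) (Ideal.span {x} : Ideal R) := by
      rw [← hS, Submodule.span_le]
      intro s hs
      refine hk ⟨s, hs⟩ a (Ideal.pow_le_pow_right ?_ ha)
      exact Finset.le_sup (f := k) (Finset.mem_univ (⟨s, hs⟩ : S))
    rintro ⟨_, s, hs, rfl⟩
    ext
    change a • q s = 0
    rw [← map_smul]
    exact (Submodule.Quotient.mk_eq_zero _).mpr (h3 hs)
  obtain ⟨k, hk⟩ := hk
  have hArt : IsArtinian R (M 1) := isArtinian_of_pow_smul k hk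
  -- chain stabilises
  let M' : ℕ →o (Submodule R (M 1))ᵒᵈ :=
    ⟨fun n => OrderDual.toDual ((M (n + 1)).comap (M 1).subtype), fun a b h =>
      Submodule.comap_mono (hManti (by omega))⟩
  obtain ⟨N, hN⟩ := IsArtinian.monotone_stabilizes M'
  have hstab : ∀ n, N + 1 ≤ n → M n ≤ M (n + 1) := by
    intro n hn y hy
    obtain ⟨n, rfl⟩ : ∃ l, n = l + 1 := ⟨n - 1, by omega⟩
    have e1 := hN n (by omega)
    have e2 := hN (n + 1) (by omega)
    have e3 : (M (n + 1)).comap (M 1).subtype = (M (n + 1 + 1)).comap (M 1).subtype :=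
      OrderDual.toDual.injective (e1.symm.trans e2)
    have hy1 : y ∈ M 1 := hManti (by omega) hy
    have : (⟨y, hy1⟩ : M 1) ∈ (M (n + 1)).comap (M 1).subtype := hy
    rw [e3] at this
    exact this
  have hstab' : ∀ n, N + 1 ≤ n → ∀ a ∈ J n, ∃ b ∈ J (n + 1), ∃ r, a = b + x * r := by
    intro n hn a ha
    obtain ⟨b, hb, hab⟩ := hstab n hn ⟨a, ha, rfl⟩
    have : a - b ∈ Ideal.span {x} := by
      rw [← Submodule.Quotient.eq]; exact hab.symm
    obtain ⟨r, hr⟩ := Ideal.mem_span_singleton.mp this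
    exact ⟨b, hb, r, by rw [← hr]; ring⟩
  refine ⟨N + 1, ?_⟩
  have key : ∀ j : ℕ, ∀ c ∈ C, (∃ r, c * X ^ (N + 1 + j) = algebraMap R K r) →
      ∃ r : R, ∃ b' ∈ C, c * X ^ (N + 1) = algebraMap R K r + X ^ (N + 1 + 1) * b' := by
    intro j
    induction j with
    | zero =>
      rintro c hc ⟨r, hr⟩
      exact ⟨r, 0, C.zero_mem, by simpa using hr⟩
    | succ j ih =>
      rintro c hc ⟨a, ha⟩
      have haJ : a ∈ J (N + 1 + (j + 1)) := ⟨c, hc, by rw [← ha]; ring⟩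
      obtain ⟨b, ⟨b', hb', hbb⟩, r', hr'⟩ := hstab' _ (by omega) a haJ
      have e : (c - X * b') * X ^ (N + 1 + j) = algebraMap R K r' := by
        apply mul_left_cancel₀ hX
        rw [← map_mul]
        have : x * r' = a - b := by rw [hr']; ring
        rw [this, map_sub, ← ha, hbb]; ring
      obtain ⟨r, b'', hb'', h⟩ := ih (c - X * b')
        (C.sub_mem hc (C.mul_mem (C.algebraMap_mem x) hb')) ⟨r', e⟩
      refine ⟨r, b'' + b', C.add_mem hb'' hb', ?_⟩
      have : c * X ^ (N + 1) = (c - X * b') * X ^ (N + 1) + X ^ (N + 1 + 1) * b' := by ring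
      rw [this, h]; ring
  intro b hb
  obtain ⟨k, hk⟩ := hC b hb
  obtain ⟨r, hr⟩ := hk (x ^ k) (Ideal.pow_mem_pow hx k)
  refine key k b hb ⟨x ^ (N + 1) * r, ?_⟩
  rw [map_mul, ← hr, map_pow, map_pow]; ring

/-- Matijevic: `C = N + x C` with `N` a finite `R`-submodule. -/
lemma matijevic (C : Subalgebra R K) (hC : ∀ c ∈ C, IsTr R c) {x : R}
    (hx : x ∈ maximalIdeal R) (hx0 : x ≠ 0) :
    ∃ N : Submodule R C, N.FG ∧ ∀ b : C, ∃ y ∈ N, ∃ b' : C, b = y + algebraMap R C x * b' := by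
  obtain ⟨n, hn⟩ := matijevic_aux C hC hx hx0
  have hX : algebraMap R K x ≠ 0 := by
    rwa [Ne, FaithfulSMul.algebraMap_eq_zero_iff]
  let N : Submodule R C :=
    { carrier := {c | ∃ r : R, (c : K) * algebraMap R K x ^ n = algebraMap R K r}
      zero_mem' := ⟨0, by simp⟩
      add_mem' := by
        rintro a b ⟨r, hr⟩ ⟨s, hs⟩
        exact ⟨r + s, by rw [map_add, ← hr, ← hs]; push_cast; ring⟩
      smul_mem' := by
        rintro t a ⟨r, hr⟩
        exact ⟨t * r, by rw [map_mul, ← hr, Algebra.smul_def]; push_cast; ring_nf⟩ }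
  have hf : ∀ c : N, ∃ r : R, ((c : C) : K) * algebraMap R K x ^ n = algebraMap R K r := fun c => c.2
  choose f hf using hf
  let F : N →ₗ[R] R :=
    { toFun := f
      map_add' := by
        intro a b
        apply IsFractionRing.injective R K
        rw [map_add, ← hf, ← hf, ← hf]; push_cast; ring
      map_smul' := by
        intro t a
        apply IsFractionRing.injective R K
        rw [smul_eq_mul, RingHom.id_apply, map_mul, ← hf, ← hf]
        have : (((t • a : N) : C) : K) = algebraMap R K t * ((a : C) : K) := by
          rw [← Algebra.smul_def]; rfl
        rw [this]; ring }
  have hFinj : Function.Injective F := by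
    intro a b h
    have h' : f a = f b := h
    have := hf a
    rw [h', ← hf b] at this
    exact Subtype.ext (Subtype.ext (mul_right_cancel₀ (pow_ne_zero _ hX) this))
  have : Module.Finite R N := Module.Finite.of_injective F hFinj
  refine ⟨N, (Module.Finite.iff_fg).mp this, fun b => ?_⟩
  obtain ⟨r, b', hb', h⟩ := hn b b.2
  refine ⟨b - algebraMap R C x * ⟨b', hb'⟩, ⟨r, ?_⟩, ⟨b', hb'⟩, by ring⟩
  have e : ((b - algebraMap R C x * ⟨b', hb'⟩ : C) : K) = (b : K) - algebraMap R K x * b' := rfl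
  rw [e, sub_mul, h]; ring

/-- Every nonzero ideal of such a `C` contains a nonzero element of `R`. -/
lemma exists_mem_of_ne_bot (C : Subalgebra R K) (I : Ideal C) (hI : I ≠ ⊥) :
    ∃ y : R, y ≠ 0 ∧ algebraMap R C y ∈ I := by
  obtain ⟨c, hc, hc0⟩ := Submodule.exists_mem_ne_zero_of_ne_bot hI
  obtain ⟨r, s, hs, h⟩ := IsFractionRing.div_surjective (A := R) (c : K)
  have hs0 : algebraMap R K s ≠ 0 := by
    rw [Ne, FaithfulSMul.algebraMap_eq_zero_iff]; exact nonZeroDivisors.ne_zero hs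
  have e : algebraMap R C r = c * algebraMap R C s := by
    apply Subtype.ext
    change algebraMap R K r = (c : K) * algebraMap R K s
    rw [← h]; field_simp
  refine ⟨r, ?_, ?_⟩
  · rintro rfl
    apply hc0
    apply Subtype.ext
    rw [← h]; simp
  · rw [e]; exact I.mul_mem_right _ hc

lemma isNoetherianRing_of_isTr (C : Subalgebra R K) (hC : ∀ c ∈ C, IsTr R c) :
    IsNoetherianRing C := by
  rw [isNoetherianRing_iff_ideal_fg]
  intro I
  by_cases hI : I = ⊥
  · rw [hI]; exact Submodule.fg_bot
  obtain ⟨y, hy0, hy⟩ := exists_mem_of_ne_bot C I hI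
  by_cases hyu : IsUnit y
  · rw [Ideal.eq_top_of_isUnit_mem I hy (hyu.map _)]
    exact ⟨{1}, by simp⟩
  obtain ⟨N, hN, h⟩ := matijevic C hC ((mem_maximalIdeal _).mpr hyu) hy0
  have : Module.Finite R N := (Module.Finite.iff_fg).mpr hN
  have : IsNoetherian R N := inferInstance
  let I' : Submodule R C := I.restrictScalars R
  have hfg : (N ⊓ I').FG := by
    have h1 : ((I').comap N.subtype).FG := IsNoetherian.noetherian _
    have := h1.map N.subtype
    rwa [Submodule.map_comap_subtype] at this
  obtain ⟨S, hS⟩ := hfg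
  classical
  refine ⟨insert (algebraMap R C y) S, le_antisymm ?_ ?_⟩
  · rw [Submodule.span_le]
    intro s hs
    simp only [Finset.coe_insert, Set.mem_insert_iff, Finset.mem_coe] at hs
    rcases hs with rfl | hs
    · exact hy
    · have : s ∈ N ⊓ I' := by rw [← hS]; exact Submodule.subset_span hs
      exact this.2
  · intro b hb
    obtain ⟨z, hz, b', e⟩ := h b
    have hzI : z ∈ I := by
      have : z = b - algebraMap R C y * b' := by rw [e]; ring
      rw [this]; exact I.sub_mem hb (I.mul_mem_right _ hy)
    have hz' : z ∈ Submodule.span R (S : Set C) := by rw [hS]; exact ⟨hz, hzI⟩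
    have hz'' : z ∈ Submodule.span C (S : Set C) :=
      Submodule.span_le_restrictScalars R C _ hz'
    rw [e]
    refine Submodule.add_mem _ (Submodule.span_mono (by simp) hz'') ?_
    rw [mul_comm, ← smul_eq_mul]
    exact Submodule.smul_mem _ _ (Submodule.subset_span (by simp))

end
section
variable {R K : Type*} [CommRing R] [IsDomain R] [IsNoetherianRing R] [IsLocalRing R]
  [Field K] [Algebra R K] [IsFractionRing R K]

/-- The ideal transform with respect to the maximal ideal. -/
def Tr (R K : Type*) [CommRing R] [IsDomain R] [IsNoetherianRing R] [IsLocalRing R]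
    [Field K] [Algebra R K] [IsFractionRing R K] : Subalgebra R K where
  carrier := {c | IsTr R c}
  mul_mem' := IsTr.mul
  add_mem' := IsTr.add
  algebraMap_mem' := IsTr.algebraMap

lemma mem_Tr {c : K} : c ∈ Tr R K ↔ IsTr R c := Iff.rfl

lemma exists_isTr_notMem (O : Subalgebra R K) (hO : ∀ z : K, IsIntegral O z → z ∈ O)
    (z : K) (hz : z ∉ O) (k : ℕ)
    (hk : ∀ a ∈ maximalIdeal R ^ k, IsIntegral R (algebraMap R K a * z)) :
    ∃ w : K, w ∉ O ∧ IsTr R w := by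
  classical
  by_contra hcon
  push Not at hcon
  have hTO : Tr R K ≤ O := fun w hw => by
    by_contra h
    exact hcon w h hw
  obtain ⟨S, hS⟩ := (isNoetherian_def.mp ‹IsNoetherianRing R›) (maximalIdeal R ^ k)
  let B := Algebra.adjoin R ((fun a => algebraMap R K a * z) '' (S : Set R))
  have hBfg : (Subalgebra.toSubmodule B).FG := by
    apply fg_adjoin_of_finite (S.finite_toSet.image _)
    rintro _ ⟨a, ha, rfl⟩
    exact hk a (by rw [← hS]; exact Submodule.subset_span ha)
  obtain ⟨G, hG⟩ := hBfg
  obtain ⟨f, hf⟩ := IsLocalization.exist_integer_multiples_of_finset (nonZeroDivisors R) G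
  have hfB : ∀ b ∈ B, ∃ r : R, algebraMap R K f * b = algebraMap R K r := by
    intro b hb
    have hb' : b ∈ Submodule.span R (G : Set K) := by rw [hG]; exact hb
    induction hb' using Submodule.span_induction with
    | mem x hx =>
      obtain ⟨r, hr⟩ := hf x hx
      exact ⟨r, by rw [hr, Algebra.smul_def]⟩
    | zero => exact ⟨0, by simp⟩
    | add x y hx hy h1 h2 =>
      obtain ⟨r, hr⟩ := h1 (by rw [hG] at hx; exact hx)
      obtain ⟨s, hs⟩ := h2 (by rw [hG] at hy; exact hy)
      exact ⟨r + s, by rw [mul_add, hr, hs, map_add]⟩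
    | smul t x hx h1 =>
      obtain ⟨r, hr⟩ := h1 (by rw [hG] at hx; exact hx)
      exact ⟨t * r, by rw [Algebra.smul_def, map_mul, ← hr]; ring⟩
  have h1 : ∀ a ∈ maximalIdeal R ^ k, algebraMap R K a * z ∈ B := by
    intro a ha
    rw [← hS] at ha
    induction ha using Submodule.span_induction with
    | mem x hx => exact Algebra.subset_adjoin ⟨x, hx, rfl⟩
    | zero => simp
    | add x y _ _ h1 h2 => rw [map_add, add_mul]; exact B.add_mem h1 h2
    | smul t x _ h1 =>
      rw [smul_eq_mul, map_mul, mul_assoc]; exact B.mul_mem (B.algebraMap_mem t) h1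
  have hN : ∀ N : ℕ, ∀ a ∈ (maximalIdeal R ^ k) ^ N, algebraMap R K a * z ^ N ∈ B := by
    intro N
    induction N with
    | zero => intro a _; simpa using B.algebraMap_mem a
    | succ N ih =>
      intro a ha
      rw [pow_succ] at ha
      induction ha using Submodule.mul_induction_on' with
      | mem_mul_mem m hm n hn =>
        have : algebraMap R K (m * n) * z ^ (N + 1) =
          (algebraMap R K m * z ^ N) * (algebraMap R K n * z) := by rw [map_mul]; ring
        rw [this]
        exact B.mul_mem (ih m hm) (h1 n hn)
      | add x _ y _ hx hy => rw [map_add, add_mul]; exact B.add_mem hx hy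
  have hTr : ∀ N : ℕ, algebraMap R K f * z ^ N ∈ Tr R K := by
    intro N
    refine ⟨k * N, fun a ha => ?_⟩
    rw [pow_mul] at ha
    obtain ⟨r, hr⟩ := hfB _ (hN N a ha)
    exact ⟨r, by rw [← hr]; ring⟩
  have hNoeth : IsNoetherianRing (Tr R K) := isNoetherianRing_of_isTr _ fun c hc => hc
  let S' := Algebra.adjoin (Tr R K) {z}
  have hS' : ∀ s ∈ S', algebraMap R K f * s ∈ Tr R K := by
    intro s hs
    have hs : s ∈ Algebra.adjoin (Tr R K) {z} := hs
    rw [Algebra.adjoin_singleton_eq_range_aeval] at hs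
    obtain ⟨p, rfl⟩ := hs
    change algebraMap R K f * Polynomial.aeval z p ∈ Tr R K
    rw [Polynomial.aeval_eq_sum_range, Finset.mul_sum]
    refine Subalgebra.sum_mem _ fun i _ => ?_
    have : algebraMap R K f * p.coeff i • z ^ i =
      (p.coeff i : K) * (algebraMap R K f * z ^ i) := by
      rw [Algebra.smul_def]
      change algebraMap R K f * ((p.coeff i : K) * z ^ i) = _
      ring
    rw [this]
    exact (Tr R K).mul_mem (p.coeff i).2 (hTr i)
  let F : S' →ₗ[Tr R K] Tr R K :=
    { toFun := fun s => ⟨algebraMap R K f * s, hS' s s.2⟩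
      map_add' := by
        intro a b
        apply Subtype.ext
        change algebraMap R K f * ((a : K) + b) = algebraMap R K f * a + algebraMap R K f * b
        ring
      map_smul' := by
        intro t a
        apply Subtype.ext
        change algebraMap R K f * ((t : K) * a) = t * (algebraMap R K f * a)
        ring }
  have hf0 : algebraMap R K f ≠ 0 := by
    rw [Ne, FaithfulSMul.algebraMap_eq_zero_iff]; exact nonZeroDivisors.ne_zero f.2
  have hFinj : Function.Injective F := by
    intro a b h
    have := congrArg Subtype.val h
    exact Subtype.ext (mul_left_cancel₀ hf0 this)
  have hfin : Module.Finite (Tr R K) S' := Module.Finite.of_injective F hFinj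
  have hInt : IsIntegral (Tr R K) z := by
    refine IsIntegral.of_mem_of_fg S' ?_ z (Algebra.subset_adjoin rfl)
    exact (Module.Finite.iff_fg (N := Subalgebra.toSubmodule S')).mp hfin
  obtain ⟨p, hp, e⟩ := hInt
  refine hz (hO z ⟨p.map (Subalgebra.inclusion hTO).toRingHom, hp.map _, ?_⟩)
  rw [Polynomial.eval₂_map]
  exact e

/-- The integral part of the transform. -/
def ITr (R K : Type*) [CommRing R] [IsDomain R] [IsNoetherianRing R] [IsLocalRing R]
    [Field K] [Algebra R K] [IsFractionRing R K] : Subalgebra R K :=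
  integralClosure R K ⊓ Tr R K

lemma mem_ITr {c : K} : c ∈ ITr R K ↔ IsIntegral R c ∧ IsTr R c := Iff.rfl

instance : IsNoetherianRing (ITr R K) := isNoetherianRing_of_isTr _ fun _ hc => hc.2

instance : Algebra.IsIntegral R (ITr R K) := by
  refine ⟨fun x => ?_⟩
  have := x.2.1
  exact (isIntegral_algHom_iff (ITr R K).val Subtype.val_injective).mp this

lemma ITr_le (O : Subalgebra R K) (hO : ∀ z : K, IsIntegral O z → z ∈ O) : ITr R K ≤ O :=
  fun z hz => hO z (IsIntegral.tower_top hz.1)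

lemma finite_primes_ITr (hm : maximalIdeal R ≠ ⊥) :
    {n : Ideal (ITr R K) | n.IsPrime ∧ ∀ r ∈ maximalIdeal R, algebraMap R (ITr R K) r ∈ n}.Finite := by
  obtain ⟨x, hx, hx0⟩ := Submodule.exists_mem_ne_zero_of_ne_bot hm
  obtain ⟨N, hN, h⟩ := matijevic (ITr R K) (fun c hc => hc.2) hx hx0
  let J := (maximalIdeal R).map (algebraMap R (ITr R K))
  let T := ITr R K ⧸ J
  have hfin : Module.Finite R T := by
    let q : ITr R K →ₐ[R] T := Ideal.Quotient.mkₐ R J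
    refine ⟨?_⟩
    have : (⊤ : Submodule R T) = N.map q.toLinearMap := by
      symm
      rw [eq_top_iff]
      intro t _
      obtain ⟨b, rfl⟩ := Ideal.Quotient.mk_surjective t
      obtain ⟨y, hy, b', e⟩ := h b
      refine ⟨y, hy, ?_⟩
      change Ideal.Quotient.mk J y = Ideal.Quotient.mk J b
      rw [eq_comm, Ideal.Quotient.mk_eq_mk_iff_sub_mem, e, add_sub_cancel_left]
      exact Ideal.mul_mem_right _ _ (Ideal.mem_map_of_mem _ hx)
    rw [this]
    exact hN.map _
  have hart : IsArtinian R T := by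
    refine isArtinian_of_pow_smul 1 fun a ha y => ?_
    rw [pow_one] at ha
    obtain ⟨b, rfl⟩ := Ideal.Quotient.mk_surjective y
    have e1 : a • Ideal.Quotient.mk J b = Ideal.Quotient.mk J (algebraMap R _ a * b) := by
      rw [← Algebra.smul_def]; rfl
    refine e1.trans ?_
    rw [Ideal.Quotient.eq_zero_iff_mem]
    exact Ideal.mul_mem_right _ _ (Ideal.mem_map_of_mem _ ha)
  have hart' : IsArtinianRing T := isArtinian_of_tower R hart
  have hfinT : {I : Ideal T | I.IsPrime}.Finite := IsArtinianRing.setOf_isPrime_finite T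
  refine (hfinT.image (Ideal.comap (Ideal.Quotient.mk J))).subset ?_
  rintro n ⟨hn, hmn⟩
  have hJn : J ≤ n := Ideal.map_le_iff_le_comap.mpr hmn
  refine ⟨n.map (Ideal.Quotient.mk J), ?_, ?_⟩
  · exact Ideal.map_isPrime_of_surjective Ideal.Quotient.mk_surjective (by rwa [Ideal.mk_ker])
  · rw [Ideal.comap_map_of_surjective _ Ideal.Quotient.mk_surjective, ← RingHom.ker_eq_comap_bot,
      Ideal.mk_ker, sup_eq_left]
    exact hJn
end
section
variable {R K : Type*} [CommRing R] [IsDomain R] [IsNoetherianRing R] [IsLocalRing R]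
  [Field K] [Algebra R K] [IsFractionRing R K]

lemma isMaximal_of_over (n : Ideal (ITr R K)) [hn : n.IsPrime]
    (hmn : ∀ r ∈ maximalIdeal R, algebraMap R (ITr R K) r ∈ n) : n.IsMaximal := by
  apply Ideal.isMaximal_of_isIntegral_of_isMaximal_comap (R := R)
  have : maximalIdeal R ≤ n.comap (algebraMap R (ITr R K)) := hmn
  have h2 : n.comap (algebraMap R (ITr R K)) = maximalIdeal R :=
    ((maximalIdeal.isMaximal R).eq_of_le (Ideal.IsPrime.ne_top inferInstance) this).symm
  rw [h2]; infer_instance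

lemma exists_pow_mul_of_maximal {C : Type*} [CommRing C] [IsNoetherianRing C] [IsDomain C]
    (n : Ideal C) [hn : n.IsMaximal] (a u : C) (ha : a ∈ n) (hu : u ∉ n)
    (h : ∀ c ∈ n, ∃ c', u * c = c' * a) (c : C) (hc : c ≠ 0) :
    ∃ N t s, t ∉ n ∧ s ∉ n ∧ t * c = s * a ^ N := by
  have hkrull : ∃ N, ¬ ∃ t s, t ∉ n ∧ t * c = s * a ^ N := by
    by_contra hcon
    push Not at hcon
    apply hc
    have := Ideal.iInf_pow_eq_bot_of_isDomain n hn.ne_top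
    rw [← Ideal.mem_bot, ← this, Ideal.mem_iInf]
    intro N
    obtain ⟨t, s, ht, e⟩ := hcon N
    have h1 : Ideal.span {t} ⊔ n ^ N = ⊤ := by
      apply Ideal.sup_pow_eq_top
      rw [sup_comm]
      exact (Ideal.IsMaximal.out (I := n)).2 _ (by
        refine lt_of_le_of_ne le_sup_left fun h => ht ?_
        rw [h]; exact Ideal.mem_sup_right (Ideal.mem_span_singleton_self t))
    have h2 : (1 : C) ∈ Ideal.span {t} ⊔ n ^ N := by rw [h1]; trivial
    obtain ⟨y, hy, z, hz, e2⟩ := Submodule.mem_sup.mp h2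
    obtain ⟨y', rfl⟩ := Ideal.mem_span_singleton'.mp hy
    have : c = y' * s * a ^ N + c * z := by linear_combination -c * e2 + y' * e
    rw [this]
    exact Ideal.add_mem _ (Ideal.mul_mem_left _ _ (Ideal.pow_mem_pow ha N))
      (Ideal.mul_mem_left _ _ hz)
  classical
  let N := Nat.find hkrull
  have hN := Nat.find_spec hkrull
  have hN0 : Nat.find hkrull ≠ 0 := by
    intro h0
    rw [h0] at hN
    exact hN ⟨1, c, fun h => hn.ne_top ((Ideal.eq_top_iff_one _).mpr h), by simp⟩
  obtain ⟨N', hN'⟩ := Nat.exists_eq_succ_of_ne_zero hN0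
  have h3 := Nat.find_min hkrull (m := N') (by omega)
  push Not at h3
  obtain ⟨t, s, ht, e⟩ := h3
  refine ⟨N', t, s, ht, fun hs => ?_, e⟩
  obtain ⟨c', hc'⟩ := h s hs
  apply hN
  refine ⟨u * t, c', fun h => ?_, ?_⟩
  · exact (hn.isPrime.mem_or_mem h).elim hu ht
  · rw [hN', pow_succ, mul_assoc, e, ← mul_assoc, hc']; ring

lemma exists_unif (n : Ideal (ITr R K)) [hn : n.IsPrime]
    (hmn : ∀ r ∈ maximalIdeal R, algebraMap R (ITr R K) r ∈ n) (hn0 : n ≠ ⊥)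
    (w : K) (hw : IsTr R w) (hwn : ∀ s : ITr R K, (s : K) * w ∈ ITr R K → s ∈ n) :
    ∃ a ∈ n, ∃ u : ITr R K, u ∉ n ∧ a ≠ 0 ∧ ∀ c ∈ n, ∃ c', u * c = c' * a := by
  let I : Ideal (ITr R K) :=
    { carrier := {c | (c : K) * w ∈ ITr R K}
      zero_mem' := by simp
      add_mem' := by
        intro a b ha hb
        have : ((a + b : ITr R K) : K) * w = a * w + b * w := by push_cast; ring
        change ((a + b : ITr R K) : K) * w ∈ ITr R K
        rw [this]; exact (ITr R K).add_mem ha hb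
      smul_mem' := by
        intro t a ha
        have : ((t • a : ITr R K) : K) * w = t * (a * w) := by
          rw [smul_eq_mul]; push_cast; ring
        change ((t • a : ITr R K) : K) * w ∈ ITr R K
        rw [this]; exact (ITr R K).mul_mem t.2 ha }
  have hI : ∀ c : ITr R K, c ∈ I ↔ (c : K) * w ∈ ITr R K := fun c => Iff.rfl
  have hIn : I ≤ n := fun s hs => hwn s hs
  obtain ⟨n', hn', hle⟩ := Ideal.exists_minimalPrimes_le hIn
  have hn'p : n'.IsPrime := hn'.1.1
  have hmn' : ∀ r ∈ maximalIdeal R, algebraMap R (ITr R K) r ∈ n' := by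
    obtain ⟨k, hk⟩ := hw
    intro r hr
    apply hn'p.mem_of_pow_mem k
    apply hn'.1.2
    obtain ⟨r', hr'⟩ := hk (r ^ k) (Ideal.pow_mem_pow hr k)
    rw [hI, ← map_pow]
    change algebraMap R K (r ^ k) * w ∈ _
    rw [hr']
    exact (ITr R K).algebraMap_mem r'
  have hmax := isMaximal_of_over n' hmn'
  obtain rfl : n' = n := hmax.eq_of_le hn.ne_top hle
  have hass : n' ∈ associatedPrimes (ITr R K) (ITr R K ⧸ I) := by
    apply Module.associatedPrimes.minimalPrimes_annihilator_subset_associatedPrimes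
    rwa [Ideal.annihilator_quotient]
  obtain ⟨-, x, hx⟩ := isAssociatedPrime_iff.mp hass
  obtain ⟨c0, rfl⟩ := Ideal.Quotient.mk_surjective x
  have hc0 : ∀ c : ITr R K, c ∈ n' ↔ (c : K) * (c0 * w) ∈ ITr R K := by
    intro c
    rw [hx, Submodule.mem_colon_singleton, Submodule.mem_bot]
    have : c • (Ideal.Quotient.mk I c0) = Ideal.Quotient.mk I (c * c0) := rfl
    rw [this, Ideal.Quotient.eq_zero_iff_mem, hI]
    push_cast
    rw [mul_assoc]
  have hw' : IsTr R ((c0 : K) * w) := IsTr.mul c0.2.2 hw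
  by_cases hcase : ∀ c (hc : c ∈ n'), (⟨(c : K) * (c0 * w), (hc0 c).mp hc⟩ : ITr R K) ∈ n'
  · exfalso
    have hInt : IsIntegral (ITr R K) ((c0 : K) * w) := by
      let f : ITr R K →ₗ[ITr R K] K := Algebra.linearMap _ _
      refine isIntegral_of_smul_mem_submodule (A := K) (M := K) (Submodule.map f n') ?_ ?_ _ ?_
      · intro hbot
        apply hn0
        rw [eq_bot_iff]
        intro c hc
        have : (f c) ∈ (⊥ : Submodule (ITr R K) K) := by
          rw [← hbot]; exact Submodule.mem_map_of_mem hc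
        rw [Submodule.mem_bot] at this
        exact Subtype.ext this
      · exact Submodule.FG.map _ ((isNoetherian_def.mp inferInstance) n')
      · rintro _ ⟨c, hc, rfl⟩
        refine ⟨⟨(c : K) * (c0 * w), (hc0 c).mp hc⟩, hcase c hc, ?_⟩
        change (c : K) * (c0 * w) = (c0 * w) * c
        ring
    have hInt' : IsIntegral R ((c0 : K) * w) := isIntegral_trans _ hInt
    have : (1 : ITr R K) ∈ n' := by
      rw [hc0, OneMemClass.coe_one, one_mul]
      exact ⟨hInt', hw'⟩
    exact hn.ne_top ((Ideal.eq_top_iff_one _).mpr this)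
  · push Not at hcase
    obtain ⟨a, ha, hu⟩ := hcase
    refine ⟨a, ha, _, hu, ?_, ?_⟩
    · rintro rfl
      apply hu
      convert n'.zero_mem
      simp
    · intro c hc
      refine ⟨⟨(c : K) * (c0 * w), (hc0 c).mp hc⟩, Subtype.ext ?_⟩
      push_cast
      ring

theorem lemmaD (O : Subalgebra R K) (hO : ∀ z : K, IsIntegral O z → z ∈ O)
    (M : Ideal O) [hM : M.IsPrime] (hMinv : ∀ o : O, o ∉ M → (o : K)⁻¹ ∈ O)
    (hmM : ∀ r ∈ maximalIdeal R, algebraMap R O r ∈ M) (w : K) (hwO : w ∉ O) (hw : IsTr R w)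
    (n : Ideal (ITr R K)) (hn : n = M.comap (Subalgebra.inclusion (ITr_le O hO))) :
    maximalIdeal R ≠ ⊥ ∧
    (∃ a : ITr R K, a ∈ n ∧ a ≠ 0 ∧ ∀ o ∈ O, o ≠ 0 → ∃ (N : ℕ) (s t : ITr R K), s ∉ n ∧ t ∉ n ∧
      (s : K) * o = t * a ^ N) ∧
    (∃ N : Submodule R (ITr R K), N.FG ∧ ∀ o : O, ∃ y ∈ N, ∃ m ∈ M, (o : K) = y + m) := by
  have hnp : n.IsPrime := by rw [hn]; infer_instance
  have hmem : ∀ c : ITr R K, c ∈ n ↔ Subalgebra.inclusion (ITr_le O hO) c ∈ M := by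
    intro c; rw [hn]; rfl
  have hmn : ∀ r ∈ maximalIdeal R, algebraMap R (ITr R K) r ∈ n := by
    intro r hr
    rw [hmem]
    exact hmM r hr
  have hm0 : maximalIdeal R ≠ ⊥ := by
    intro h0
    obtain ⟨k, hk⟩ := hw
    apply hwO
    have hfield : IsField R := IsLocalRing.isField_iff_maximalIdeal_eq.mpr h0
    obtain ⟨r, s, e⟩ := IsFractionRing.div_surjective (A := R) w
    obtain ⟨s', hs'⟩ := hfield.mul_inv_cancel (nonZeroDivisors.ne_zero e.1)
    have hs0 : algebraMap R K s ≠ 0 := by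
      rw [Ne, FaithfulSMul.algebraMap_eq_zero_iff]; exact nonZeroDivisors.ne_zero e.1
    have : w = algebraMap R K (r * s') := by
      rw [← e.2, div_eq_iff hs0, ← map_mul]; congr 1; linear_combination -r * hs'
    rw [this]; exact O.algebraMap_mem _
  obtain ⟨x, hx, hx0⟩ := Submodule.exists_mem_ne_zero_of_ne_bot hm0
  have hn0 : n ≠ ⊥ := by
    intro h0
    have := hmn x hx
    rw [h0, Ideal.mem_bot] at this
    exact hx0 ((FaithfulSMul.algebraMap_eq_zero_iff R (ITr R K)).mp this)
  have hmax := isMaximal_of_over n hmn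
  have hinv : ∀ s : ITr R K, s ∉ n → (s : K)⁻¹ ∈ O := by
    intro s hs
    rw [hmem] at hs
    exact hMinv _ hs
  have hne : ∀ s : ITr R K, s ∉ n → (s : K) ≠ 0 := by
    intro s hs h0
    apply hs
    have : s = 0 := Subtype.ext h0
    rw [this]; exact n.zero_mem
  obtain ⟨a, ha, u, hu, ha0, hau⟩ := exists_unif n hmn hn0 w hw (by
    intro s hs
    by_contra hsn
    apply hwO
    have := O.mul_mem (hinv s hsn) (ITr_le O hO hs)
    rwa [inv_mul_cancel_left₀ (hne s hsn)] at this)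
  have haK : (a : K) ≠ 0 := fun h => ha0 (Subtype.ext h)
  have key : ∀ o ∈ O, o ≠ 0 → ∃ (N : ℕ) (s t : ITr R K), s ∉ n ∧ t ∉ n ∧
      (s : K) * o = t * a ^ N := by
    intro o ho ho0
    obtain ⟨c, d, e⟩ := IsFractionRing.div_surjective (A := R) o
    have hd0 : algebraMap R K d ≠ 0 := by
      rw [Ne, FaithfulSMul.algebraMap_eq_zero_iff]; exact nonZeroDivisors.ne_zero e.1
    have hc0 : algebraMap R K c ≠ 0 := by
      intro h; rw [h, zero_div] at e; exact ho0 e.2.symm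
    have e' : algebraMap R K c = o * algebraMap R K d := by rw [← e.2]; field_simp
    obtain ⟨N1, t1, s1, ht1, hs1, e1⟩ := exists_pow_mul_of_maximal n a u ha hu hau
      (algebraMap R (ITr R K) c) (by
        intro h; apply hc0; exact congrArg Subtype.val h)
    obtain ⟨N2, t2, s2, ht2, hs2, e2⟩ := exists_pow_mul_of_maximal n a u ha hu hau
      (algebraMap R (ITr R K) d) (by
        intro h; apply hd0; exact congrArg Subtype.val h)
    have e1' : (t1 : K) * algebraMap R K c = s1 * a ^ N1 := congrArg Subtype.val e1
    have e2' : (t2 : K) * algebraMap R K d = s2 * a ^ N2 := congrArg Subtype.val e2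
    have e3 : (t1 * s2 : K) * o * a ^ N2 = (t2 * s1 : K) * a ^ N1 := by
      linear_combination (-t1 * o) * e2' - t1 * t2 * e' + t2 * e1'
    have hA : t1 * s2 ∉ n := fun h => (hnp.mem_or_mem h).elim ht1 hs2
    have hB : t2 * s1 ∉ n := fun h => (hnp.mem_or_mem h).elim ht2 hs1
    rcases le_or_gt N2 N1 with h | h
    · obtain ⟨N, rfl⟩ := Nat.exists_eq_add_of_le h
      refine ⟨N, t1 * s2, t2 * s1, hA, hB, ?_⟩
      apply mul_right_cancel₀ (pow_ne_zero N2 haK)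
      push_cast
      rw [e3, pow_add]; ring
    · exfalso
      obtain ⟨N, rfl⟩ := Nat.exists_eq_add_of_lt h
      have e4 : ((t1 * s2 * a ^ (N + 1) : ITr R K) : K) * o = ((t2 * s1 : ITr R K) : K) := by
        apply mul_right_cancel₀ (pow_ne_zero N1 haK)
        push_cast
        rw [← e3]; ring
      apply hB
      rw [hmem]
      have e5 : Subalgebra.inclusion (ITr_le O hO) (t2 * s1) =
        Subalgebra.inclusion (ITr_le O hO) (t1 * s2 * a ^ (N + 1)) * ⟨o, ho⟩ :=
        Subtype.ext e4.symm
      rw [e5]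
      apply Ideal.mul_mem_right
      rw [← hmem]
      exact Ideal.mul_mem_left _ _ (Ideal.pow_mem_of_mem _ ha _ (by omega))
  refine ⟨hm0, ⟨a, ha, ha0, key⟩, ?_⟩
  obtain ⟨N, hN, h⟩ := matijevic (ITr R K) (fun c hc => hc.2) hx hx0
  refine ⟨N, hN, ?_⟩
  have hD3 : ∀ o : O, ∃ s c : ITr R K, s ∉ n ∧ (s : K) * o = c := by
    intro o
    by_cases ho : (o : K) = 0
    · exact ⟨1, 0, fun h => hnp.ne_top ((Ideal.eq_top_iff_one _).mpr h), by simp [ho]⟩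
    · obtain ⟨N, s, t, hs, ht, e⟩ := key o o.2 ho
      exact ⟨s, t * a ^ N, hs, by push_cast; exact e⟩
  intro o
  obtain ⟨s, c, hs, e⟩ := hD3 o
  obtain ⟨s', hs'⟩ : ∃ s', s * s' - 1 ∈ n := by
    have := hmax.exists_inv hs
    obtain ⟨y, i, hi, e⟩ := this
    exact ⟨y, by rw [← e]; have : s * y - (y * s + i) = -i := by ring
                 rw [this]; exact n.neg_mem hi⟩
  obtain ⟨y, hy, b', e1⟩ := h (s' * c)
  refine ⟨y, hy, o - Subalgebra.inclusion (ITr_le O hO) y, ?_, ?_⟩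
  · have : o - Subalgebra.inclusion (ITr_le O hO) y =
      Subalgebra.inclusion (ITr_le O hO) (-(s * s' - 1)) * o +
      Subalgebra.inclusion (ITr_le O hO) (algebraMap R _ x * b') := by
      apply Subtype.ext
      have e1' : (s' : K) * c = y + algebraMap R K x * b' := congrArg Subtype.val e1
      change (o : K) - y = (-((s : K) * s' - 1)) * o + algebraMap R K x * b'
      linear_combination (s' : K) * e + e1'
    rw [this]
    refine M.add_mem (M.mul_mem_right _ ?_) ?_
    · rw [← hmem]; exact n.neg_mem hs'
    · rw [← hmem]; exact n.mul_mem_right _ (hmn x hx)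
  · change (o : K) = y + (o - y)
    ring
end
section
lemma exists_mul_isIntegral_of_loc {D K O : Type*} [CommRing D] [IsDomain D] [Field K] [Algebra D K]
    [FaithfulSMul D K] (P : Ideal D) [hP : P.IsPrime] [CommRing O] [Algebra O K]
    [FaithfulSMul O K]
    (h1 : ∀ o : O, ∃ s : D, s ∉ P ∧ ∃ d : D, algebraMap D K s * algebraMap O K o = algebraMap D K d)
    (h2 : ∀ s : D, s ∉ P → ∃ o : O, algebraMap D K s * algebraMap O K o = 1)
    (h3 : ∀ d : D, ∃ o : O, algebraMap O K o = algebraMap D K d)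
    (z : K) (hz : IsIntegral O z) : ∃ s : D, s ∉ P ∧ IsIntegral D (algebraMap D K s * z) := by
  have hOinj : Function.Injective (algebraMap O K) := FaithfulSMul.algebraMap_injective O K
  have hDinj : Function.Injective (algebraMap D K) := FaithfulSMul.algebraMap_injective D K
  choose f hf using h3
  let φ : D →+* O :=
    { toFun := f
      map_one' := hOinj (by rw [hf, map_one, map_one])
      map_zero' := hOinj (by rw [hf, map_zero, map_zero])
      map_mul' := fun a b => hOinj (by rw [hf, map_mul, map_mul, hf, hf])
      map_add' := fun a b => hOinj (by rw [hf, map_add, map_add, hf, hf]) }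
  letI : Algebra D O := φ.toAlgebra
  haveI : IsScalarTower D O K := IsScalarTower.of_algebraMap_eq fun d => (hf d).symm
  have hphi : ∀ d, algebraMap O K (algebraMap D O d) = algebraMap D K d := hf
  haveI : IsLocalization P.primeCompl O := by
    constructor
    constructor
    · rintro ⟨s, hs⟩
      obtain ⟨o, ho⟩ := h2 s hs
      refine IsUnit.of_mul_eq_one o (hOinj ?_)
      rw [map_mul, hphi, map_one]; exact ho
    · intro o
      obtain ⟨s, hs, d, e⟩ := h1 o
      refine ⟨⟨d, ⟨s, hs⟩⟩, hOinj ?_⟩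
      rw [map_mul, hphi, hphi, mul_comm]; exact e
    · intro a b h
      refine ⟨1, ?_⟩
      have : a = b := hDinj (by rw [← hphi, ← hphi]; exact congrArg _ h)
      rw [this]
  obtain ⟨⟨s, hs⟩, h⟩ := IsIntegral.exists_multiple_integral_of_isLocalization (R := D)
    P.primeCompl z hz
  refine ⟨s, hs, ?_⟩
  rw [← Algebra.smul_def]
  exact h
end

section
variable {E R K : Type*} [CommRing E] [IsDomain E]
  [Field K] [Algebra E K] [IsFractionRing E K]
  (p : Ideal E) [p.IsPrime] [CommRing R] [Algebra E R] [IsLocalization.AtPrime R p]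
  [Algebra R K] [IsScalarTower E R K]
  (P : Ideal (integralClosure E K)) [hP : P.IsPrime]
  (hPp : P.comap (algebraMap E (integralClosure E K)) = p)

lemma mem_int {z : K} : z ∈ integralClosure E K ↔ IsIntegral E z := Iff.rfl

lemma mem_int_of_isIntegral {z : K} (hz : IsIntegral (integralClosure E K) z) :
    z ∈ integralClosure E K := isIntegral_trans z hz

lemma notMem_of_notMem (hPp : P.comap (algebraMap E (integralClosure E K)) = p) {e : E} (he : e ∉ p) : algebraMap E (integralClosure E K) e ∉ P := by
  intro h
  rw [← hPp] at he
  exact he h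

/-- The localization of the integral closure at `P`, as a subalgebra. -/
def locO : Subalgebra R K where
  carrier := {z | ∃ s : integralClosure E K, s ∉ P ∧ (s : K) * z ∈ integralClosure E K}
  mul_mem' := by
    rintro a b ⟨s, hs, h⟩ ⟨t, ht, h'⟩
    refine ⟨s * t, fun h => (hP.mem_or_mem h).elim hs ht, ?_⟩
    have := mul_mem h h'
    convert this using 1
    push_cast
    ring
  add_mem' := by
    rintro a b ⟨s, hs, h⟩ ⟨t, ht, h'⟩
    refine ⟨s * t, fun h => (hP.mem_or_mem h).elim hs ht, ?_⟩
    have := add_mem (mul_mem t.2 h) (mul_mem s.2 h')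
    convert this using 1
    push_cast
    ring
  algebraMap_mem' := by
    intro r
    obtain ⟨⟨e, s⟩, h⟩ := IsLocalization.surj p.primeCompl r
    refine ⟨algebraMap E _ s, notMem_of_notMem p P hPp s.2, ?_⟩
    have h' := congrArg (algebraMap R K) h
    rw [map_mul, ← IsScalarTower.algebraMap_apply E R K, ← IsScalarTower.algebraMap_apply E R K]
      at h'
    have : ((algebraMap E (integralClosure E K) s : integralClosure E K) : K) * algebraMap R K r =
      algebraMap E K e := by rw [← h', mul_comm]; rfl
    rw [this]
    exact (integralClosure E K).algebraMap_mem e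

lemma mem_locO {z : K} : z ∈ locO (R := R) p P hPp ↔
    ∃ s : integralClosure E K, s ∉ P ∧ (s : K) * z ∈ integralClosure E K := Iff.rfl

lemma coe_ne_zero_of_notMem {s : integralClosure E K} (hs : s ∉ P) : (s : K) ≠ 0 := by
  intro h
  apply hs
  have : s = 0 := Subtype.ext h
  rw [this]; exact P.zero_mem

lemma one_notMem : (1 : integralClosure E K) ∉ P :=
  fun h => hP.ne_top ((Ideal.eq_top_iff_one _).mpr h)

lemma le_locO (d : integralClosure E K) : (d : K) ∈ locO (R := R) p P hPp :=
  ⟨1, one_notMem P, by simp⟩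

lemma inv_mem_locO {s : integralClosure E K} (hs : s ∉ P) : (s : K)⁻¹ ∈ locO (R := R) p P hPp :=
  ⟨s, hs, by rw [mul_inv_cancel₀ (coe_ne_zero_of_notMem P hs)]; exact one_mem _⟩

lemma locO_closed (z : K) (hz : IsIntegral (locO (R := R) p P hPp) z) :
    z ∈ locO (R := R) p P hPp := by
  haveI : FaithfulSMul (locO (R := R) p P hPp) K :=
    (faithfulSMul_iff_algebraMap_injective _ _).mpr Subtype.val_injective
  haveI : FaithfulSMul (integralClosure E K) K :=
    (faithfulSMul_iff_algebraMap_injective _ _).mpr Subtype.val_injective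
  obtain ⟨s, hs, h⟩ := exists_mul_isIntegral_of_loc (O := locO (R := R) p P hPp) (K := K) P
    (by
      rintro ⟨o, s, hs, h⟩
      exact ⟨s, hs, ⟨_, h⟩, rfl⟩)
    (by
      intro s hs
      exact ⟨⟨_, inv_mem_locO p P hPp hs⟩, mul_inv_cancel₀ (coe_ne_zero_of_notMem P hs)⟩)
    (by
      intro d
      exact ⟨⟨_, le_locO p P hPp d⟩, rfl⟩) z hz
  exact ⟨s, hs, mem_int_of_isIntegral h⟩

/-- The maximal ideal of the localization. -/
def locM : Ideal (locO (R := R) p P hPp) where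
  carrier := {z | ∃ s d : integralClosure E K, s ∉ P ∧ d ∈ P ∧ (s : K) * z = d}
  zero_mem' := ⟨1, 0, one_notMem P, P.zero_mem, by simp⟩
  add_mem' := by
    rintro a b ⟨s, d, hs, hd, h⟩ ⟨t, d', ht, hd', h'⟩
    refine ⟨s * t, t * d + s * d', fun h => (hP.mem_or_mem h).elim hs ht,
      P.add_mem (P.mul_mem_left _ hd) (P.mul_mem_left _ hd'), ?_⟩
    push_cast
    rw [← h, ← h']; ring
  smul_mem' := by
    rintro ⟨a, t, ht, ha⟩ b ⟨s, d, hs, hd, h⟩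
    refine ⟨s * t, ⟨_, ha⟩ * d, fun h => (hP.mem_or_mem h).elim hs ht, P.mul_mem_left _ hd, ?_⟩
    rw [smul_eq_mul]
    push_cast
    rw [← h]; ring

lemma mem_locM {z : locO (R := R) p P hPp} : z ∈ locM (R := R) p P hPp ↔
    ∃ s d : integralClosure E K, s ∉ P ∧ d ∈ P ∧ (s : K) * z = d := Iff.rfl

lemma coe_mem_locM (d : integralClosure E K) :
    (⟨(d : K), le_locO p P hPp d⟩ : locO (R := R) p P hPp) ∈ locM (R := R) p P hPp ↔ d ∈ P := by
  constructor
  · rintro ⟨s, d', hs, hd', e⟩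
    have : s * d = d' := Subtype.ext e
    exact (hP.mem_or_mem (this ▸ hd')).resolve_left hs
  · intro h
    exact ⟨1, d, one_notMem P, h, by simp⟩

lemma inv_mem_of_notMem_locM (o : locO (R := R) p P hPp) (ho : o ∉ locM (R := R) p P hPp) :
    (o : K)⁻¹ ∈ locO (R := R) p P hPp := by
  obtain ⟨o, s, hs, h⟩ := o
  have hd : (⟨_, h⟩ : integralClosure E K) ∉ P := fun hd => ho ⟨s, ⟨_, h⟩, hs, hd, rfl⟩
  refine ⟨⟨_, h⟩, hd, ?_⟩
  have h0 := coe_ne_zero_of_notMem P hd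
  have ho0 : o ≠ 0 := by
    rintro rfl; simp at h0
  change (s : K) * o * o⁻¹ ∈ _
  rw [mul_inv_cancel_right₀ ho0]
  exact s.2

instance locM_isPrime : (locM (R := R) p P hPp).IsPrime := by
  refine ⟨?_, ?_⟩
  · intro h
    have : (1 : locO (R := R) p P hPp) ∈ locM (R := R) p P hPp := by rw [h]; trivial
    have h2 := (coe_mem_locM (R := R) p P hPp 1).mp this
    exact one_notMem P h2
  · intro a b hab
    by_contra hcon
    push Not at hcon
    have ha := inv_mem_of_notMem_locM p P hPp a hcon.1
    apply hcon.2
    have ha0 : (a : K) ≠ 0 := by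
      intro h
      apply hcon.1
      have : a = 0 := Subtype.ext h
      rw [this]; exact Ideal.zero_mem _
    have : b = ⟨_, ha⟩ * (a * b) := by
      apply Subtype.ext
      push_cast
      rw [inv_mul_cancel_left₀ ha0]
    rw [this]
    exact Ideal.mul_mem_left _ _ hab

lemma maximal_le_locM [IsLocalRing R] (r : R) (hr : r ∈ maximalIdeal R) :
    algebraMap R (locO (R := R) p P hPp) r ∈ locM (R := R) p P hPp := by
  obtain ⟨⟨e, s⟩, h⟩ := IsLocalization.surj p.primeCompl r
  have he : algebraMap E R e ∈ maximalIdeal R := by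
    rw [← h]; exact Ideal.mul_mem_right _ _ hr
  have he' : e ∈ p := (IsLocalization.AtPrime.to_map_mem_maximal_iff R p e).mp he
  refine ⟨algebraMap E _ s, algebraMap E _ e, notMem_of_notMem p P hPp s.2, ?_, ?_⟩
  · rw [← hPp] at he'; exact he'
  · have h' := congrArg (algebraMap R K) h
    rw [map_mul, ← IsScalarTower.algebraMap_apply E R K, ← IsScalarTower.algebraMap_apply E R K]
      at h'
    rw [mul_comm]
    exact h'

end
section
lemma exists_mul_pow_mem_of_minimal {D : Type*} [CommRing D] (I P : Ideal D)
    (hP : P ∈ I.minimalPrimes) (a : D) (ha : a ∈ P) :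
    ∃ s : D, s ∉ P ∧ ∃ k : ℕ, s * a ^ k ∈ I := by
  have hPp : P.IsPrime := hP.1.1
  by_contra hcon
  push Not at hcon
  let S : Submonoid D := P.primeCompl ⊔ Submonoid.powers a
  have hdisj : Disjoint (I : Set D) (S : Set D) := by
    rw [Set.disjoint_left]
    intro x hx hxS
    obtain ⟨s, hs, _, ⟨k, rfl⟩, rfl⟩ := Submonoid.mem_sup.mp hxS
    exact hcon s hs k hx
  obtain ⟨Q, hQ, hIQ, hQS⟩ := Ideal.exists_le_prime_disjoint I S hdisj
  have hQP : Q ≤ P := by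
    intro x hx
    by_contra hxP
    exact Set.disjoint_left.mp hQS hx ((le_sup_left : P.primeCompl ≤ S) hxP)
  have : P ≤ Q := hP.2 ⟨hQ, hIQ⟩ hQP
  exact Set.disjoint_left.mp hQS (this ha)
    ((le_sup_right : Submonoid.powers a ≤ S) (Submonoid.mem_powers a))
end

section
lemma combine_smul {E D M : Type*} [CommRing E] [CommRing D] [Algebra E D] [AddCommGroup M]
    [Module E M] [Module D M] [IsScalarTower E D M] (P : Ideal D) [hP : P.IsPrime]
    (I : Ideal E) (hI : I.FG) (f : E →ₗ[E] M) (V : Submodule D M)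
    (h : ∀ q ∈ I, ∃ s : D, s ∉ P ∧ s • f q ∈ V) : ∃ s : D, s ∉ P ∧ ∀ q ∈ I, s • f q ∈ V := by
  classical
  obtain ⟨S, rfl⟩ := hI
  have : ∀ T : Finset E, T ⊆ S → ∃ s : D, s ∉ P ∧ ∀ q ∈ T, s • f q ∈ V := by
    intro T
    induction T using Finset.induction_on with
    | empty => intro _; exact ⟨1, fun h => hP.ne_top ((Ideal.eq_top_iff_one _).mpr h), by simp⟩
    | insert a T ha ih =>
      intro hT
      obtain ⟨s, hs, h1⟩ := ih (fun x hx => hT (Finset.mem_insert_of_mem hx))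
      obtain ⟨t, ht, h2⟩ := h a (Submodule.subset_span (hT (Finset.mem_insert_self a T)))
      refine ⟨s * t, fun h => (hP.mem_or_mem h).elim hs ht, ?_⟩
      intro q hq
      rcases Finset.mem_insert.mp hq with rfl | hq
      · rw [mul_smul]; exact V.smul_mem _ h2
      · rw [mul_comm, mul_smul]; exact V.smul_mem _ (h1 q hq)
  obtain ⟨s, hs, h1⟩ := this S subset_rfl
  refine ⟨s, hs, fun q hq => ?_⟩
  induction hq using Submodule.span_induction with
  | mem x hx => exact h1 x hx
  | zero => simp
  | add x y _ _ h1 h2 => rw [map_add, smul_add]; exact V.add_mem h1 h2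
  | smul t x _ h1 =>
    rw [map_smul, ← algebraMap_smul D t (f x), smul_comm]
    exact V.smul_mem _ h1
end

section
variable {E K : Type*} [CommRing E] [IsDomain E]
  [Field K] [Algebra E K] [IsFractionRing E K]

/-- The relevant primes of the integral closure. -/
def InP (P : Ideal (integralClosure E K)) : Prop :=
  P.IsPrime ∧ ∃ z : K, (∀ s : integralClosure E K, (s : K) * z ∈ integralClosure E K → s ∈ P) ∧
    ∃ k, ∀ a ∈ (P.comap (algebraMap E (integralClosure E K))) ^ k,
      algebraMap E K a * z ∈ integralClosure E K

/-- The ideal of denominators. -/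
def den (z : K) : Ideal (integralClosure E K) where
  carrier := {d | (d : K) * z ∈ integralClosure E K}
  zero_mem' := by simp
  add_mem' := by
    intro a b ha hb
    have : ((a + b : integralClosure E K) : K) * z = a * z + b * z := by push_cast; ring
    change ((a + b : integralClosure E K) : K) * z ∈ integralClosure E K
    rw [this]; exact add_mem ha hb
  smul_mem' := by
    intro t a ha
    have : ((t • a : integralClosure E K) : K) * z = t * (a * z) := by
      rw [smul_eq_mul]; push_cast; ring
    change ((t • a : integralClosure E K) : K) * z ∈ integralClosure E K
    rw [this]; exact mul_mem t.2 ha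

lemma mem_den {z : K} {d : integralClosure E K} :
  d ∈ den z ↔ (d : K) * z ∈ integralClosure E K := Iff.rfl

lemma inP_of_minimal [IsNoetherianRing E] (z : K) (P : Ideal (integralClosure E K))
    (hP : P ∈ (den (E := E) z).minimalPrimes) : InP P := by
  have hPp : P.IsPrime := hP.1.1
  refine ⟨hPp, ?_⟩
  set p := P.comap (algebraMap E (integralClosure E K)) with hp
  let J : Ideal E :=
    { carrier := {a | ∃ s : integralClosure E K, s ∉ P ∧
        (s : K) * (algebraMap E K a * z) ∈ integralClosure E K}
      zero_mem' := ⟨1, one_notMem P, by simp⟩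
      add_mem' := by
        rintro a b ⟨s, hs, h⟩ ⟨t, ht, h'⟩
        refine ⟨s * t, fun h => (hPp.mem_or_mem h).elim hs ht, ?_⟩
        have := add_mem (mul_mem t.2 h) (mul_mem s.2 h')
        convert this using 1
        rw [map_add]
        push_cast
        ring
      smul_mem' := by
        rintro c a ⟨s, hs, h⟩
        refine ⟨s, hs, ?_⟩
        have := mul_mem ((integralClosure E K).algebraMap_mem c) h
        convert this using 1
        rw [smul_eq_mul, map_mul]
        ring }
  have hpJ : p ≤ J.radical := by
    intro a ha
    obtain ⟨s, hs, k, hk⟩ : ∃ s : integralClosure E K, s ∉ P ∧ ∃ k : ℕ,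
        s * (algebraMap E (integralClosure E K) a) ^ k ∈ den (E := E) z :=
      exists_mul_pow_mem_of_minimal _ P hP _ ha
    refine ⟨k, s, hs, ?_⟩
    rw [mem_den] at hk
    convert hk using 1
    rw [map_pow]
    change (s : K) * (algebraMap E K a ^ k * z) = s * algebraMap E K a ^ k * z
    ring
  obtain ⟨k, hk⟩ := Ideal.exists_pow_le_of_le_radical_of_fg hpJ (IsNoetherian.noetherian p)
  obtain ⟨s, hs, h⟩ := combine_smul P (p ^ k) (IsNoetherian.noetherian _)
    ((LinearMap.mulRight E z).comp (Algebra.linearMap E K))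
    (Subalgebra.toSubmodule (⊥ : Subalgebra (integralClosure E K) K)) (by
      intro q hq
      obtain ⟨s, hs, h⟩ := hk hq
      refine ⟨s, hs, ?_⟩
      exact ⟨⟨_, h⟩, rfl⟩)
  refine ⟨s * z, ?_, k, ?_⟩
  · intro t ht
    have : t * s ∈ den (E := E) z := by
      rw [mem_den]; push_cast; rwa [mul_assoc]
    exact (hPp.mem_or_mem (hP.1.2 this)).resolve_right hs
  · intro a ha
    obtain ⟨d, hd⟩ := h a ha
    have : algebraMap E K a * (s * z) = d := by
      have hd' : (d : K) = s * (algebraMap E K a * z) := hd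
      rw [hd']; ring
    rw [this]; exact d.2
end
section
variable {E R K : Type*} [CommRing E] [IsDomain E] [IsNoetherianRing E]
  [Field K] [Algebra E K] [IsFractionRing E K]
  (p : Ideal E) [p.IsPrime] [CommRing R] [IsDomain R] [IsNoetherianRing R] [IsLocalRing R]
  [Algebra E R] [IsLocalization.AtPrime R p]
  [Algebra R K] [IsScalarTower E R K] [IsFractionRing R K]
  (P : Ideal (integralClosure E K)) [hP : P.IsPrime]
  (hPp : P.comap (algebraMap E (integralClosure E K)) = p)

lemma exists_w (hIn : InP P) : ∃ w : K, w ∉ locO (R := R) p P hPp ∧ IsTr R w := by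
  obtain ⟨-, z, hz, k, hk⟩ := hIn
  refine exists_isTr_notMem (locO (R := R) p P hPp) (locO_closed p P hPp) z ?_ k ?_
  · rintro ⟨s, hs, h⟩
    exact hs (hz s h)
  · intro a ha
    rw [← IsLocalization.AtPrime.map_eq_maximalIdeal p R, ← Ideal.map_pow] at ha
    induction ha using Submodule.span_induction with
    | mem x hx =>
      obtain ⟨e, he, rfl⟩ := hx
      rw [← IsScalarTower.algebraMap_apply E R K]
      rw [hPp] at hk
      have := hk e he
      rw [mem_int] at this
      exact this.tower_top
    | zero => simp [isIntegral_zero]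
    | add x y _ _ h1 h2 => rw [map_add, add_mul]; exact h1.add h2
    | smul t x _ h1 =>
      rw [smul_eq_mul, map_mul, mul_assoc]; exact (isIntegral_algebraMap).mul h1

/-- The trace of `P` on `ITr`. -/
def nOf : Ideal (ITr R K) :=
  (locM (R := R) p P hPp).comap
    (Subalgebra.inclusion (ITr_le (locO (R := R) p P hPp) (locO_closed p P hPp)))

lemma lemmaD' (hIn : InP P) :
    maximalIdeal R ≠ ⊥ ∧
    (∃ a : ITr R K, a ∈ nOf (R := R) p P hPp ∧ a ≠ 0 ∧ ∀ o ∈ locO (R := R) p P hPp, o ≠ 0 →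
      ∃ (N : ℕ) (s t : ITr R K), s ∉ nOf (R := R) p P hPp ∧ t ∉ nOf (R := R) p P hPp ∧
      (s : K) * o = t * a ^ N) ∧
    (∃ N : Submodule R (ITr R K), N.FG ∧ ∀ o : locO (R := R) p P hPp, ∃ y ∈ N,
      ∃ m ∈ locM (R := R) p P hPp, (o : K) = y + m) := by
  obtain ⟨w, hw, hw'⟩ := exists_w (R := R) p P hPp hIn
  exact lemmaD (locO (R := R) p P hPp) (locO_closed p P hPp) (locM (R := R) p P hPp)
    (inv_mem_of_notMem_locM p P hPp) (maximal_le_locM p P hPp) w hw hw' _ rfl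

lemma exists_of_mem_nOf {c : ITr R K} (hc : c ∈ nOf (R := R) p P hPp) :
    ∃ s d : integralClosure E K, s ∉ P ∧ d ∈ P ∧ (s : K) * c = d := hc

lemma exists_of_notMem_nOf {c : ITr R K} (hc : c ∉ nOf (R := R) p P hPp) :
    ∃ s d : integralClosure E K, s ∉ P ∧ d ∉ P ∧ (s : K) * c = d := by
  obtain ⟨s, hs, h⟩ := (ITr_le (locO (R := R) p P hPp) (locO_closed p P hPp)) c.2
  exact ⟨s, ⟨_, h⟩, hs, fun hd => hc ⟨s, ⟨_, h⟩, hs, hd, rfl⟩, rfl⟩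

/-- Existence of a uniformizer. -/
lemma unif_aux (R : Type*) [CommRing R] [IsDomain R] [IsNoetherianRing R] [IsLocalRing R]
    [Algebra E R] [IsLocalization.AtPrime R p]
    [Algebra R K] [IsScalarTower E R K] [IsFractionRing R K]
    (hPp : P.comap (algebraMap E (integralClosure E K)) = p) (hIn : InP P) :
    ∃ a ∈ P, a ≠ 0 ∧ ∀ b : integralClosure E K, b ≠ 0 →
    ∃ (N : ℕ) (s t : integralClosure E K), s ∉ P ∧ t ∉ P ∧ s * b = t * a ^ N := by
  obtain ⟨-, ⟨a, ha, ha0, h⟩, -⟩ := lemmaD' (R := R) p P hPp hIn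
  obtain ⟨σ, d, hσ, hd, e⟩ := exists_of_mem_nOf p P hPp ha
  refine ⟨d, hd, ?_, ?_⟩
  · rintro rfl
    have h1 := coe_ne_zero_of_notMem P hσ
    have h2 : (a : K) ≠ 0 := fun h => ha0 (Subtype.ext h)
    apply mul_ne_zero h1 h2
    rw [e]; rfl
  · intro b hb
    obtain ⟨N, s, t, hs, ht, e1⟩ := h b (le_locO p P hPp b) (fun h => hb (Subtype.ext h))
    obtain ⟨σ1, s1, hσ1, hs1, e2⟩ := exists_of_notMem_nOf p P hPp hs
    obtain ⟨σ2, t1, hσ2, ht1, e3⟩ := exists_of_notMem_nOf p P hPp ht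
    refine ⟨N, s1 * σ2 * σ ^ N, σ1 * t1, ?_, ?_, Subtype.ext ?_⟩
    · intro h
      rcases hP.mem_or_mem h with h | h
      · exact (hP.mem_or_mem h).elim hs1 hσ2
      · exact hσ (hP.mem_of_pow_mem _ h)
    · exact fun h => (hP.mem_or_mem h).elim hσ1 ht1
    · push_cast
      rw [← e, ← e2, ← e3, mul_pow]
      linear_combination (σ1 * σ2 * σ ^ N : K) * e1

lemma res_aux (R : Type*) [CommRing R] [IsDomain R] [IsNoetherianRing R] [IsLocalRing R]
    [Algebra E R] [IsLocalization.AtPrime R p]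
    [Algebra R K] [IsScalarTower E R K] [IsFractionRing R K]
    (hPp : P.comap (algebraMap E (integralClosure E K)) = p) (hIn : InP P) :
    ∃ N : Submodule E (integralClosure E K), N.FG ∧ ∀ b : integralClosure E K,
    ∃ s : E, s ∉ p ∧ ∃ y ∈ N, algebraMap E _ s * b - y ∈ P := by
  classical
  obtain ⟨-, -, N, ⟨G, rfl⟩, h⟩ := lemmaD' (R := R) p P hPp hIn
  have hg : ∀ g : ITr R K, ∃ s : E, s ∉ p ∧ algebraMap E K s * g ∈ integralClosure E K := by
    intro g
    obtain ⟨⟨s, hs⟩, h⟩ := IsIntegral.exists_multiple_integral_of_isLocalization (R := E)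
      p.primeCompl _ g.2.1
    refine ⟨s, hs, ?_⟩
    rw [← Algebra.smul_def]
    exact h
  choose σ hσ hσ' using hg
  let F : ITr R K → integralClosure E K := fun g => ⟨_, hσ' g⟩
  let N : Submodule E (integralClosure E K) := Submodule.span E (G.image F : Finset _)
  have key : ∀ y ∈ Submodule.span R (G : Set (ITr R K)), ∃ s : E, s ∉ p ∧ ∃ n ∈ N,
      algebraMap E K s * (y : K) = n := by
    intro y hy
    induction hy using Submodule.span_induction with
    | mem g hg =>
      exact ⟨σ g, hσ g, F g, Submodule.subset_span (by
        rw [Finset.mem_coe]; exact Finset.mem_image_of_mem F hg), rfl⟩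
    | zero =>
      exact ⟨1, fun h => ‹p.IsPrime›.ne_top ((Ideal.eq_top_iff_one _).mpr h), 0, N.zero_mem,
        by simp⟩
    | add x y _ _ h1 h2 =>
      obtain ⟨s, hs, n, hn, e⟩ := h1
      obtain ⟨t, ht, n', hn', e'⟩ := h2
      refine ⟨s * t, fun h => (‹p.IsPrime›.mem_or_mem h).elim hs ht, t • n + s • n',
        N.add_mem (N.smul_mem _ hn) (N.smul_mem _ hn'), ?_⟩
      rw [map_mul]
      push_cast
      rw [Algebra.smul_def, Algebra.smul_def, ← e, ← e']
      ring
    | smul r x _ h1 =>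
      obtain ⟨s, hs, n, hn, e⟩ := h1
      obtain ⟨⟨c, t⟩, h⟩ := IsLocalization.surj p.primeCompl r
      have h' := congrArg (algebraMap R K) h
      rw [map_mul, ← IsScalarTower.algebraMap_apply E R K, ← IsScalarTower.algebraMap_apply E R K]
        at h'
      refine ⟨t * s, fun h => (‹p.IsPrime›.mem_or_mem h).elim t.2 hs, c • n, N.smul_mem _ hn, ?_⟩
      rw [map_mul]
      push_cast
      rw [Algebra.smul_def, Algebra.smul_def, ← e]
      linear_combination (algebraMap E K s * x) * h'
  refine ⟨N, ⟨_, rfl⟩, fun b => ?_⟩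
  obtain ⟨y, hy, m, hm, e⟩ := h ⟨b, le_locO p P hPp b⟩
  obtain ⟨s, hs, n, hn, e1⟩ := key y hy
  refine ⟨s, hs, n, hn, ?_⟩
  rw [← coe_mem_locM (R := R) p P hPp]
  have : (⟨((algebraMap E (integralClosure E K) s * b - n : integralClosure E K) : K),
      le_locO p P hPp _⟩ : locO (R := R) p P hPp) =
      ⟨((algebraMap E (integralClosure E K) s : integralClosure E K) : K), le_locO p P hPp _⟩ * m := by
    apply Subtype.ext
    push_cast
    have e' : (b : K) = y + m := e
    change algebraMap E K s * b - n = algebraMap E K s * m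
    rw [← e1, e']; ring
  rw [this]
  exact Ideal.mul_mem_left _ _ hm

lemma mem_iff_nOf (hIn : InP P) (d : integralClosure E K) : d ∈ P ↔
    ∃ s c : ITr R K, s ∉ nOf (R := R) p P hPp ∧ c ∈ nOf (R := R) p P hPp ∧ (s : K) * d = c := by
  constructor
  · intro hd
    obtain ⟨-, ⟨a, ha, ha0, h⟩, -⟩ := lemmaD' (R := R) p P hPp hIn
    by_cases hd0 : d = 0
    · refine ⟨1, 0, ?_, Ideal.zero_mem _, by simp [hd0]⟩
      intro h1
      obtain ⟨s, d', hs, hd', e⟩ := exists_of_mem_nOf p P hPp h1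
      rw [OneMemClass.coe_one, mul_one] at e
      exact hs (Subtype.ext e ▸ hd')
    obtain ⟨N, s, t, hs, ht, e⟩ := h d (le_locO p P hPp d) (fun h => hd0 (Subtype.ext h))
    refine ⟨s, t * a ^ N, hs, ?_, by push_cast; exact e⟩
    by_contra hcon
    obtain ⟨σ1, s1, hσ1, hs1, e2⟩ := exists_of_notMem_nOf p P hPp hs
    obtain ⟨σ2, t1, hσ2, ht1, e3⟩ := exists_of_notMem_nOf p P hPp hcon
    have : σ2 * s1 * d = σ1 * t1 := by
      apply Subtype.ext
      push_cast at e3 ⊢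
      rw [← e3, ← e, ← e2]; ring
    have h2 : σ1 * t1 ∈ P := by rw [← this]; exact P.mul_mem_left _ hd
    exact (hP.mem_or_mem h2).elim hσ1 ht1
  · rintro ⟨s, c, hs, hc, e⟩
    obtain ⟨σ1, s1, hσ1, hs1, e2⟩ := exists_of_notMem_nOf p P hPp hs
    obtain ⟨σ2, t1, hσ2, ht1, e3⟩ := exists_of_mem_nOf p P hPp hc
    have : σ2 * s1 * d = σ1 * t1 := by
      apply Subtype.ext
      push_cast
      rw [← e3, ← e, ← e2]; ring
    have h2 : σ2 * s1 * d ∈ P := by rw [this]; exact P.mul_mem_left _ ht1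
    rcases hP.mem_or_mem h2 with h | h
    · exact ((hP.mem_or_mem h).elim hσ2 hs1).elim
    · exact h

lemma finite_over (R : Type*) [CommRing R] [IsDomain R] [IsNoetherianRing R] [IsLocalRing R]
    [Algebra E R] [IsLocalization.AtPrime R p]
    [Algebra R K] [IsScalarTower E R K] [IsFractionRing R K] :
    {P : Ideal (integralClosure E K) | InP P ∧
      P.comap (algebraMap E (integralClosure E K)) = p}.Finite := by
  classical
  by_cases hne : ∃ P : Ideal (integralClosure E K), InP P ∧
      P.comap (algebraMap E (integralClosure E K)) = p
  swap
  · convert Set.finite_empty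
    ext P
    simp only [Set.mem_setOf_eq, Set.mem_empty_iff_false, iff_false]
    exact fun h => hne ⟨P, h⟩
  obtain ⟨P0, hP0, hP0p⟩ := hne
  have hm : maximalIdeal R ≠ ⊥ := by
    haveI := hP0.1
    exact (lemmaD' (R := R) p P0 hP0p hP0).1
  have hfin := finite_primes_ITr (K := K) hm
  let f : Ideal (integralClosure E K) → Ideal (ITr R K) := fun P =>
    if h : InP P ∧ P.comap (algebraMap E (integralClosure E K)) = p then
      haveI := h.1.1
      nOf (R := R) p P h.2
    else ⊥
  refine Set.Finite.of_finite_image (f := f) (hfin.subset ?_) ?_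
  · rintro _ ⟨P, h, rfl⟩
    haveI := h.1.1
    have : f P = nOf (R := R) p P h.2 := dif_pos h
    rw [this]
    refine ⟨?_, ?_⟩
    · unfold nOf; infer_instance
    · intro r hr
      exact maximal_le_locM p P h.2 r hr
  · intro P h P' h' e
    haveI := h.1.1
    haveI := h'.1.1
    have e1 : f P = nOf (R := R) p P h.2 := dif_pos h
    have e2 : f P' = nOf (R := R) p P' h'.2 := dif_pos h'
    ext d
    rw [mem_iff_nOf (R := R) p P h.2 h.1 d, mem_iff_nOf (R := R) p P' h'.2 h'.1 d, ← e1, ← e2, e]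

lemma mem_ass (R : Type*) [CommRing R] [IsDomain R] [IsNoetherianRing R] [IsLocalRing R]
    [Algebra E R] [IsLocalization.AtPrime R p]
    [Algebra R K] [IsScalarTower E R K] [IsFractionRing R K]
    (hPp : P.comap (algebraMap E (integralClosure E K)) = p) (hIn : InP P)
    (x : E) (hx : x ∈ p) (hx0 : x ≠ 0) : p ∈ associatedPrimes E (E ⧸ Ideal.span {x}) := by
  classical
  have hp : p.IsPrime := inferInstance
  have hinjE : Function.Injective (algebraMap E K) := FaithfulSMul.algebraMap_injective E K
  have hinjR : Function.Injective (algebraMap R K) := FaithfulSMul.algebraMap_injective R K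
  have hER : ∀ e, algebraMap R K (algebraMap E R e) = algebraMap E K e := fun e =>
    (IsScalarTower.algebraMap_apply E R K e).symm
  obtain ⟨w, hw, hw'⟩ := exists_w (R := R) p P hPp hIn
  have hwR : ¬ ∃ r, w = algebraMap R K r := by
    rintro ⟨r, rfl⟩
    exact hw (Subalgebra.algebraMap_mem _ r)
  -- reduce to exponent one
  obtain ⟨w1, hw1, hw1m⟩ : ∃ w1 : K, (¬ ∃ r, w1 = algebraMap R K r) ∧
      ∀ a ∈ maximalIdeal R, ∃ r, algebraMap R K a * w1 = algebraMap R K r := by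
    have hN := Nat.find_spec hw'
    have hN0 : Nat.find hw' ≠ 0 := by
      intro h0
      rw [h0] at hN
      obtain ⟨r, hr⟩ := hN 1 (by simp)
      exact hwR ⟨r, by simpa using hr⟩
    obtain ⟨k, hk⟩ := Nat.exists_eq_succ_of_ne_zero hN0
    have h3 := Nat.find_min hw' (m := k) (by omega)
    push Not at h3
    obtain ⟨a, ha, h4⟩ := h3
    refine ⟨algebraMap R K a * w, by push Not; exact h4, fun b hb => ?_⟩
    obtain ⟨r, hr⟩ := hN (b * a) (by
      rw [hk, pow_succ']; exact Ideal.mul_mem_mul hb ha)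
    exact ⟨r, by rw [← hr, map_mul]; ring⟩
  have hxm : algebraMap E R x ∈ maximalIdeal R :=
    (IsLocalization.AtPrime.to_map_mem_maximal_iff R p x).mpr hx
  obtain ⟨e, he⟩ := hw1m _ hxm
  obtain ⟨⟨f, t⟩, hf⟩ := IsLocalization.surj p.primeCompl e
  have hf' := congrArg (algebraMap R K) hf
  rw [map_mul, hER, hER] at hf'
  rw [hER] at he
  have hxK : algebraMap E K x ≠ 0 := fun h => hx0 (hinjE (by rw [h, map_zero]))
  -- f = t x w1
  have hfw : algebraMap E K f = algebraMap E K t * algebraMap E K x * w1 := by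
    rw [← hf', ← he]; ring
  have hnot : ∀ c : E, c ∉ p → c * f ∉ Ideal.span {x} := by
    intro c hc h
    obtain ⟨g, hg⟩ := Ideal.mem_span_singleton'.mp h
    apply hw1
    have hct : c * t ∉ p := fun h => (hp.mem_or_mem h).elim hc t.2
    have hu := IsLocalization.map_units R (⟨c * t, hct⟩ : p.primeCompl)
    obtain ⟨v, hv⟩ := hu.exists_right_inv
    have hv' := congrArg (algebraMap R K) hv
    rw [map_mul, hER, map_one] at hv'
    refine ⟨algebraMap E R g * v, ?_⟩
    have hg' := congrArg (algebraMap E K) hg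
    rw [map_mul, map_mul, hfw] at hg'
    rw [map_mul, hER]
    have hv2 : algebraMap E K c * algebraMap E K t * algebraMap R K v = 1 := by
      rw [← hv', map_mul]
    have : algebraMap E K g = algebraMap E K c * algebraMap E K t * w1 := by
      apply mul_right_cancel₀ hxK
      rw [hg']; ring
    rw [this]
    linear_combination (-w1) * hv2
  obtain ⟨s, hs, h⟩ := combine_smul p p (IsNoetherian.noetherian p)
    (LinearMap.mulRight E f) (Ideal.span {x}) (by
      intro q hq
      have hqm : algebraMap E R q ∈ maximalIdeal R :=
        (IsLocalization.AtPrime.to_map_mem_maximal_iff R p q).mpr hq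
      obtain ⟨r, hr⟩ := hw1m _ hqm
      obtain ⟨⟨g, s⟩, hg⟩ := IsLocalization.surj p.primeCompl r
      have hg' := congrArg (algebraMap R K) hg
      rw [map_mul, hER, hER] at hg'
      rw [hER] at hr
      refine ⟨s, s.2, ?_⟩
      apply Ideal.mem_span_singleton'.mpr
      refine ⟨t * g, hinjE ?_⟩
      rw [LinearMap.mulRight_apply, smul_eq_mul]
      rw [map_mul, map_mul, map_mul, map_mul, hfw, ← hg', ← hr]
      ring)
  refine isAssociatedPrime_iff.mpr ⟨hp, Ideal.Quotient.mk _ (s * f), ?_⟩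
  ext q
  rw [Submodule.mem_colon_singleton, Submodule.mem_bot]
  have hsm : q • (Ideal.Quotient.mk (Ideal.span {x}) (s * f)) = Ideal.Quotient.mk _ (q * (s * f)) :=
    rfl
  rw [hsm, Ideal.Quotient.eq_zero_iff_mem]
  constructor
  · intro hq
    have := h q hq
    rw [LinearMap.mulRight_apply, smul_eq_mul] at this
    rwa [mul_left_comm]
  · intro hq
    by_contra hqp
    exact hnot (q * s) (fun h => (hp.mem_or_mem h).elim hqp hs) (by rwa [mul_assoc])
end
section
/-- `P` has a uniformizer. -/
def Unif {D : Type*} [CommRing D] (P : Ideal D) : Prop :=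
  ∃ a ∈ P, a ≠ 0 ∧ ∀ b : D, b ≠ 0 → ∃ (N : ℕ) (s t : D), s ∉ P ∧ t ∉ P ∧ s * b = t * a ^ N

variable {A D : Type*} [CommRing A] [IsNoetherianRing A] [CommRing D] [IsDomain D] [Algebra A D]

lemma Unif.eq_of_le {P Q : Ideal D} [hP : P.IsPrime] [hQ : Q.IsPrime] (hU : Unif P) (hle : Q ≤ P)
    {x : D} (hx : x ∈ Q) (hx0 : x ≠ 0) : Q = P := by
  obtain ⟨a, haP, ha0, h⟩ := hU
  have haQ : a ∈ Q := by
    obtain ⟨N, s, t, hs, ht, e⟩ := h x hx0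
    have : t * a ^ N ∈ Q := by rw [← e]; exact Q.mul_mem_left _ hx
    exact hQ.mem_of_pow_mem _ ((hQ.mem_or_mem this).resolve_left fun h => ht (hle h))
  refine le_antisymm hle fun b hb => ?_
  by_cases hb0 : b = 0
  · rw [hb0]; exact Q.zero_mem
  obtain ⟨N, s, t, hs, ht, e⟩ := h b hb0
  have hN : N ≠ 0 := by
    rintro rfl
    rw [pow_zero, mul_one] at e
    exact ht (e ▸ P.mul_mem_left _ hb)
  have : s * b ∈ Q := by rw [e]; exact Q.mul_mem_left _ (Ideal.pow_mem_of_mem _ haQ _ (by omega))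
  exact (hQ.mem_or_mem this).resolve_left fun h => hs (hle h)

lemma Unif.exists_dvd {P : Ideal D} [hP : P.IsPrime] (hU : Unif P) {x y : D} (hx0 : x ≠ 0)
    (hy : y ∈ P) : ∃ (e : ℕ) (τ : D), τ ∉ P ∧ x ∣ τ * y ^ e := by
  obtain ⟨a, haP, ha0, h⟩ := hU
  by_cases hy0 : y = 0
  · exact ⟨1, 1, fun h => hP.ne_top ((Ideal.eq_top_iff_one _).mpr h), by simp [hy0]⟩
  obtain ⟨e, t1, t2, ht1, ht2, e1⟩ := h x hx0
  obtain ⟨M, s, t, hs, ht, e2⟩ := h y hy0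
  have hM : M ≠ 0 := by
    rintro rfl
    rw [pow_zero, mul_one] at e2
    exact ht (e2 ▸ P.mul_mem_left _ hy)
  obtain ⟨M', rfl⟩ := Nat.exists_eq_succ_of_ne_zero hM
  refine ⟨e, t2 * s ^ e, fun h => (hP.mem_or_mem h).elim ht2 fun h => hs (hP.mem_of_pow_mem _ h),
    t1 * (t ^ e * (a ^ M') ^ e), ?_⟩
  have : s ^ e * y ^ e = t ^ e * (a ^ M') ^ e * a ^ e := by
    rw [← mul_pow, e2, ← mul_pow, ← mul_pow]; congr 1; rw [Nat.succ_eq_add_one, pow_succ]; ring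
  calc t2 * s ^ e * y ^ e = t2 * (s ^ e * y ^ e) := by ring
    _ = t2 * a ^ e * (t ^ e * (a ^ M') ^ e) := by rw [this]; ring
    _ = _ := by rw [← e1]; ring

/-- finiteness of a quotient. -/
def FinQ (A : Type*) {D : Type*} [CommRing A] [CommRing D] [Algebra A D] (I : Ideal D) : Prop :=
  ∃ N : Submodule A D, N.FG ∧ ∀ b : D, ∃ y ∈ N, b - y ∈ I

lemma FinQ.step {I J : Ideal D} (hI : FinQ A I) {M : Type*} [AddCommGroup M] [Module A M]
    [Module.Finite A M] (ψ : (I.restrictScalars A) →ₗ[A] M)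
    (hψ : ∀ b, ψ b = 0 → (b : D) ∈ J) : FinQ A J := by
  classical
  obtain ⟨N, hN, h⟩ := hI
  haveI : IsNoetherian A M := isNoetherian_of_isNoetherianRing_of_finite A M
  obtain ⟨T, hT⟩ := IsNoetherian.noetherian (LinearMap.range ψ)
  have hT' : ∀ m : T, ∃ b, ψ b = m := by
    intro m
    have : (m : M) ∈ LinearMap.range ψ := by rw [← hT]; exact Submodule.subset_span m.2
    exact this
  choose g hg using hT'
  let N2 : Submodule A D := Submodule.span A (Set.range fun m : T => (g m : D))
  have hN2 : ∀ m ∈ LinearMap.range ψ, ∃ b : I.restrictScalars A, ψ b = m ∧ (b : D) ∈ N2 := by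
    intro m hm
    rw [← hT] at hm
    induction hm using Submodule.span_induction with
    | mem x hx => exact ⟨g ⟨x, hx⟩, hg _, Submodule.subset_span ⟨_, rfl⟩⟩
    | zero => exact ⟨0, map_zero _, N2.zero_mem⟩
    | add x y _ _ h1 h2 =>
      obtain ⟨b, hb, hb'⟩ := h1
      obtain ⟨c, hc, hc'⟩ := h2
      exact ⟨b + c, by rw [map_add, hb, hc], N2.add_mem hb' hc'⟩
    | smul r x _ h1 =>
      obtain ⟨b, hb, hb'⟩ := h1
      exact ⟨r • b, by rw [map_smul, hb], N2.smul_mem _ hb'⟩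
  refine ⟨N ⊔ N2, hN.sup (Submodule.fg_span (Set.finite_range _)), fun b => ?_⟩
  obtain ⟨y, hy, hby⟩ := h b
  obtain ⟨c, hc, hc'⟩ := hN2 (ψ ⟨b - y, hby⟩) ⟨_, rfl⟩
  refine ⟨y + c, Submodule.add_mem_sup hy hc', ?_⟩
  have := hψ (⟨b - y, hby⟩ - c) (by rw [map_sub, hc, sub_self])
  convert this using 1
  change b - (y + c) = (b - y) - c
  ring

lemma FinQ.finite {I : Ideal D} (hI : FinQ A I) : Module.Finite A (D ⧸ I) := by
  obtain ⟨N, hN, h⟩ := hI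
  refine ⟨?_⟩
  have : (⊤ : Submodule A (D ⧸ I)) = N.map (Ideal.Quotient.mkₐ A I).toLinearMap := by
    symm
    rw [eq_top_iff]
    intro t _
    obtain ⟨b, rfl⟩ := Ideal.Quotient.mk_surjective t
    obtain ⟨y, hy, e⟩ := h b
    exact ⟨y, hy, ((Ideal.Quotient.mk_eq_mk_iff_sub_mem _ _).mpr e).symm⟩
  rw [this]
  exact hN.map _

lemma finQ_of_finite {I : Ideal D} [Module.Finite A (D ⧸ I)] : FinQ A I := by
  have h0 : FinQ A (⊤ : Ideal D) := ⟨⊥, Submodule.fg_bot, fun b => ⟨0, Submodule.zero_mem _, trivial⟩⟩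
  refine h0.step ((Ideal.Quotient.mkₐ A I).toLinearMap.comp (Submodule.subtype _)) ?_
  intro b hb
  exact Ideal.Quotient.eq_zero_iff_mem.mp hb

/-- The local part. -/
def locI (P : Ideal D) [hP : P.IsPrime] (y : D) : Ideal D where
  carrier := {b | ∃ s, s ∉ P ∧ y ∣ s * b}
  zero_mem' := ⟨1, fun h => hP.ne_top ((Ideal.eq_top_iff_one _).mpr h), by simp⟩
  add_mem' := by
    rintro a b ⟨s, hs, h⟩ ⟨t, ht, h'⟩
    refine ⟨s * t, fun h => (hP.mem_or_mem h).elim hs ht, ?_⟩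
    have := dvd_add (h.mul_left t) (h'.mul_left s)
    convert this using 1; ring
  smul_mem' := by
    rintro c a ⟨s, hs, h⟩
    refine ⟨s, hs, ?_⟩
    have := h.mul_left c
    convert this using 1; rw [smul_eq_mul]; ring

lemma mem_locI (P : Ideal D) [hP : P.IsPrime] (y b : D) :
    b ∈ locI P y ↔ ∃ s, s ∉ P ∧ y ∣ s * b := Iff.rfl

lemma finQ_locI (S : Finset (Ideal D)) (x : D) (hx0 : x ≠ 0)
    (hprime : ∀ P ∈ S, P.IsPrime) (hxP : ∀ P ∈ S, x ∈ P) (hunif : ∀ P ∈ S, Unif P)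
    (hloc : ∀ b, (∀ P ∈ S, ∃ s, s ∉ P ∧ x ∣ s * b) → x ∣ b)
    (P : Ideal D) (hPS : P ∈ S) [hP : P.IsPrime] [hfin : Module.Finite A (D ⧸ P)] :
    FinQ A (locI P x) := by
  classical
  -- the element sigma
  have hσk : ∀ Q : Ideal D, ∃ σ, Q ∈ S → Q ≠ P → σ ∉ P ∧ ∃ τ, τ ∉ Q ∧ x ∣ τ * σ := by
    intro Q
    by_cases hQ : Q ∈ S
    swap
    · exact ⟨0, fun h => absurd h hQ⟩
    by_cases hne : Q = P
    · exact ⟨0, fun _ h => absurd hne h⟩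
    haveI := hprime Q hQ
    have : ¬ Q ≤ P := fun hle => hne ((hunif P hPS).eq_of_le hle (hxP Q hQ) hx0)
    obtain ⟨y, hyQ, hyP⟩ := SetLike.not_le_iff_exists.mp this
    obtain ⟨e, τ, hτ, hd⟩ := (hunif Q hQ).exists_dvd hx0 hyQ
    exact ⟨y ^ e, fun _ _ => ⟨fun h => hyP (hP.mem_of_pow_mem _ h), τ, hτ, hd⟩⟩
  choose σk hσk using hσk
  let σ := ∏ Q ∈ S.erase P, σk Q
  have hσP : σ ∉ P := by
    intro h
    obtain ⟨Q, hQ, h⟩ := (Ideal.IsPrime.prod_mem_iff (hp := hP)).mp h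
    exact (hσk Q (Finset.mem_of_mem_erase hQ) (Finset.ne_of_mem_erase hQ)).1 h
  have hσQ : ∀ Q ∈ S, Q ≠ P → ∃ τ, τ ∉ Q ∧ x ∣ τ * σ := by
    intro Q hQ hne
    obtain ⟨-, τ, hτ, hd⟩ := hσk Q hQ hne
    exact ⟨τ, hτ, hd.trans (mul_dvd_mul_left _
      (Finset.dvd_prod_of_mem σk (Finset.mem_erase.mpr ⟨hne, hQ⟩)))⟩
  obtain ⟨a, haP, ha0, hG⟩ := hunif P hPS
  obtain ⟨e, t1, t2, ht1, ht2, e1⟩ := hG x hx0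
  have hchain : ∀ j, j ≤ e → FinQ A (locI P (a ^ j)) := by
    intro j
    induction j with
    | zero =>
      intro _
      refine ⟨⊥, Submodule.fg_bot, fun b => ⟨0, Submodule.zero_mem _, 1, fun h =>
        hP.ne_top ((Ideal.eq_top_iff_one _).mpr h), by simp⟩⟩
    | succ j ih =>
      intro hj
      have hq : ∀ b : (locI P (a ^ j)).restrictScalars A, ∃ q, σ * b * a ^ (e - j) = x * q := by
        rintro ⟨b, s, hs, b', hb'⟩
        apply hloc
        intro Q hQ
        by_cases hne : Q = P
        · subst hne
          refine ⟨s * t2, fun h => (hP.mem_or_mem h).elim hs ht2, t1 * σ * b', ?_⟩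
          have : a ^ e = a ^ j * a ^ (e - j) := by rw [← pow_add]; congr 1; omega
          calc s * t2 * (σ * b * a ^ (e - j)) = t2 * σ * a ^ (e - j) * (s * b) := by ring
            _ = t2 * a ^ e * σ * b' := by rw [hb', this]; ring
            _ = _ := by rw [← e1]; ring
        · obtain ⟨τ, hτ, hd⟩ := hσQ Q hQ hne
          refine ⟨τ, hτ, ?_⟩
          have := hd.mul_right (b * a ^ (e - j))
          convert this using 1; ring
      choose q hq using hq
      let ψ : (locI P (a ^ j)).restrictScalars A →ₗ[A] D ⧸ P :=
        (Ideal.Quotient.mkₐ A P).toLinearMap.comp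
        { toFun := q
          map_add' := by
            intro b c
            apply mul_left_cancel₀ hx0
            rw [← hq, mul_add, ← hq, ← hq]
            push_cast
            ring
          map_smul' := by
            intro r b
            apply mul_left_cancel₀ hx0
            rw [← hq, RingHom.id_apply, mul_smul_comm, ← hq]
            change σ * (r • (b : D)) * _ = _
            rw [mul_smul_comm, smul_mul_assoc] }
      refine (ih (by omega)).step ψ ?_
      intro b hb
      have hqP : q b ∈ P := Ideal.Quotient.eq_zero_iff_mem.mp hb
      by_cases hq0 : q b = 0
      · have h0 := hq b
        rw [hq0, mul_zero] at h0
        have hb0 : (b : D) = 0 := by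
          rcases mul_eq_zero.mp h0 with h | h
          · rcases mul_eq_zero.mp h with h | h
            · exact absurd (h ▸ P.zero_mem) hσP
            · exact h
          · exact absurd h (pow_ne_zero _ ha0)
        rw [hb0]; exact Ideal.zero_mem _
      obtain ⟨N, s, t, hs, ht, e2⟩ := hG _ hq0
      have hN : N ≠ 0 := by
        rintro rfl
        rw [pow_zero, mul_one] at e2
        exact ht (e2 ▸ P.mul_mem_left _ hqP)
      obtain ⟨N', rfl⟩ := Nat.exists_eq_succ_of_ne_zero hN
      refine ⟨t1 * s * σ, ?_, t2 * t * a ^ N', ?_⟩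
      · intro h
        rcases hP.mem_or_mem h with h | h
        · exact (hP.mem_or_mem h).elim ht1 hs
        · exact hσP h
      · apply mul_right_cancel₀ (pow_ne_zero (e - j) ha0)
        have : a ^ e = a ^ j * a ^ (e - j) := by rw [← pow_add]; congr 1; omega
        calc t1 * s * σ * b * a ^ (e - j) = t1 * s * (σ * b * a ^ (e - j)) := by ring
          _ = (t1 * x) * (s * q b) := by rw [hq]; ring
          _ = _ := by rw [e1, e2, this, Nat.succ_eq_add_one]; ring
  obtain ⟨N, hN, h⟩ := hchain e le_rfl
  refine ⟨N, hN, fun b => ?_⟩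
  obtain ⟨y, hy, s, hs, c, hc⟩ := h b
  refine ⟨y, hy, t2 * s, fun h => (hP.mem_or_mem h).elim ht2 hs, t1 * c, ?_⟩
  rw [mul_assoc, hc, ← mul_assoc, ← e1]; ring

theorem finQ_span (S : Finset (Ideal D)) (x : D) (hx0 : x ≠ 0)
    (hprime : ∀ P ∈ S, P.IsPrime) (hxP : ∀ P ∈ S, x ∈ P) (hunif : ∀ P ∈ S, Unif P)
    (hloc : ∀ b, (∀ P ∈ S, ∃ s, s ∉ P ∧ x ∣ s * b) → x ∣ b)
    (hfin : ∀ P ∈ S, Module.Finite A (D ⧸ P)) : FinQ A (Ideal.span {x}) := by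
  classical
  have h1 : ∀ T : Finset (Ideal D), T ⊆ S →
      ∃ I : Ideal D, FinQ A I ∧ ∀ b ∈ I, ∀ P ∈ T, ∃ s, s ∉ P ∧ x ∣ s * b := by
    intro T
    induction T using Finset.induction_on with
    | empty =>
      intro _
      exact ⟨⊤, ⟨⊥, Submodule.fg_bot, fun b => ⟨0, Submodule.zero_mem _, trivial⟩⟩, by simp⟩
    | insert P T hP ih =>
      intro hT
      obtain ⟨I, hI, h⟩ := ih (fun Q hQ => hT (Finset.mem_insert_of_mem hQ))
      have hPS : P ∈ S := hT (Finset.mem_insert_self _ _)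
      haveI := hprime P hPS
      haveI := hfin P hPS
      have h2 : FinQ A (locI P x) := finQ_locI S x hx0 hprime hxP hunif hloc P hPS
      haveI := h2.finite
      refine ⟨I ⊓ locI P x, ?_, ?_⟩
      · refine hI.step ((Ideal.Quotient.mkₐ A (locI P x)).toLinearMap.comp (Submodule.subtype _)) ?_
        intro b hb
        exact ⟨b.2, Ideal.Quotient.eq_zero_iff_mem.mp hb⟩
      · intro b hb Q hQ
        rcases Finset.mem_insert.mp hQ with rfl | hQ
        · exact hb.2
        · exact h b hb.1 Q hQ
  obtain ⟨I, ⟨N, hN, h⟩, h2⟩ := h1 S subset_rfl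
  refine ⟨N, hN, fun b => ?_⟩
  obtain ⟨y, hy, hby⟩ := h b
  exact ⟨y, hy, Ideal.mem_span_singleton.mpr (hloc _ (h2 _ hby))⟩
end
section
variable {E K : Type*} [CommRing E] [IsDomain E] [IsNoetherianRing E]
  [Field K] [Algebra E K] [IsFractionRing E K]

lemma isUnit_algebraMap_primeCompl (p : Ideal E) [p.IsPrime] (y : p.primeCompl) :
    IsUnit (algebraMap E K y) := by
  rw [isUnit_iff_ne_zero]
  intro h
  have : (y : E) = 0 := (FaithfulSMul.algebraMap_injective E K) (by rw [h, map_zero])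
  exact y.2 (this ▸ p.zero_mem)

/-- The algebra structure of the fraction field over a localization. -/
abbrev algLoc (p : Ideal E) [p.IsPrime] : Algebra (Localization.AtPrime p) K :=
  (IsLocalization.lift (M := p.primeCompl) (S := Localization.AtPrime p) (g := algebraMap E K)
    (isUnit_algebraMap_primeCompl p)).toAlgebra

lemma towerLoc (p : Ideal E) [p.IsPrime] :
    letI : Algebra (Localization.AtPrime p) K := algLoc p
    IsScalarTower E (Localization.AtPrime p) K := by
  letI : Algebra (Localization.AtPrime p) K := algLoc p
  refine IsScalarTower.of_algebraMap_eq fun x => ?_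
  exact (IsLocalization.lift_eq (M := p.primeCompl) (S := Localization.AtPrime p)
    (isUnit_algebraMap_primeCompl (K := K) p) x).symm

lemma fracLoc (p : Ideal E) [p.IsPrime] :
    letI : Algebra (Localization.AtPrime p) K := algLoc p
    IsFractionRing (Localization.AtPrime p) K := by
  letI : Algebra (Localization.AtPrime p) K := algLoc p
  haveI : IsScalarTower E (Localization.AtPrime p) K := towerLoc p
  exact IsFractionRing.isFractionRing_of_isDomain_of_isLocalization p.primeCompl
    (Localization.AtPrime p) K

lemma unif_of_inP (P : Ideal (integralClosure E K)) (hIn : InP P) : Unif P := by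
  haveI := hIn.1
  set p := P.comap (algebraMap E (integralClosure E K)) with hp
  letI : Algebra (Localization.AtPrime p) K := algLoc p
  haveI : IsScalarTower E (Localization.AtPrime p) K := towerLoc p
  haveI : IsFractionRing (Localization.AtPrime p) K := fracLoc p
  haveI : IsNoetherianRing (Localization.AtPrime p) :=
    IsLocalization.isNoetherianRing p.primeCompl _ inferInstance
  exact unif_aux p P (Localization.AtPrime p) rfl hIn

lemma res_of_inP (P : Ideal (integralClosure E K)) (hIn : InP P) :
    ∃ N : Submodule E (integralClosure E K), N.FG ∧ ∀ b : integralClosure E K,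
    ∃ s : E, algebraMap E (integralClosure E K) s ∉ P ∧
      ∃ y ∈ N, algebraMap E _ s * b - y ∈ P := by
  haveI := hIn.1
  set p := P.comap (algebraMap E (integralClosure E K)) with hp
  letI : Algebra (Localization.AtPrime p) K := algLoc p
  haveI : IsScalarTower E (Localization.AtPrime p) K := towerLoc p
  haveI : IsFractionRing (Localization.AtPrime p) K := fracLoc p
  haveI : IsNoetherianRing (Localization.AtPrime p) :=
    IsLocalization.isNoetherianRing p.primeCompl _ inferInstance
  exact res_aux p P (Localization.AtPrime p) rfl hIn

lemma finite_over' (p : Ideal E) [p.IsPrime] :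
    {P : Ideal (integralClosure E K) | InP P ∧
      P.comap (algebraMap E (integralClosure E K)) = p}.Finite := by
  letI : Algebra (Localization.AtPrime p) K := algLoc p
  haveI : IsScalarTower E (Localization.AtPrime p) K := towerLoc p
  haveI : IsFractionRing (Localization.AtPrime p) K := fracLoc p
  haveI : IsNoetherianRing (Localization.AtPrime p) :=
    IsLocalization.isNoetherianRing p.primeCompl _ inferInstance
  exact finite_over p (Localization.AtPrime p)

lemma mem_ass' (P : Ideal (integralClosure E K)) (hIn : InP P) (x : E) (hx0 : x ≠ 0)
    (hx : algebraMap E (integralClosure E K) x ∈ P) :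
    P.comap (algebraMap E (integralClosure E K)) ∈ associatedPrimes E (E ⧸ Ideal.span {x}) := by
  haveI := hIn.1
  set p := P.comap (algebraMap E (integralClosure E K)) with hp
  letI : Algebra (Localization.AtPrime p) K := algLoc p
  haveI : IsScalarTower E (Localization.AtPrime p) K := towerLoc p
  haveI : IsFractionRing (Localization.AtPrime p) K := fracLoc p
  haveI : IsNoetherianRing (Localization.AtPrime p) :=
    IsLocalization.isNoetherianRing p.primeCompl _ inferInstance
  exact mem_ass p P (Localization.AtPrime p) rfl hIn x hx hx0

lemma finite_inP (x : E) (hx0 : x ≠ 0) :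
    {P : Ideal (integralClosure E K) | InP P ∧
      algebraMap E (integralClosure E K) x ∈ P}.Finite := by
  have h := associatedPrimes.finite E (E ⧸ Ideal.span {x})
  refine (h.biUnion (t := fun p => {P : Ideal (integralClosure E K) | InP P ∧
      P.comap (algebraMap E (integralClosure E K)) = p}) ?_).subset ?_
  · intro p hp
    haveI : p.IsPrime := hp.isPrime
    exact finite_over' p
  · rintro P ⟨h1, h2⟩
    exact Set.mem_biUnion (mem_ass' P h1 x hx0 h2) ⟨h1, rfl⟩

lemma dvd_of_loc (x : integralClosure E K) (hx0 : x ≠ 0) (b : integralClosure E K)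
    (h : ∀ P : Ideal (integralClosure E K), InP P → x ∈ P → ∃ s, s ∉ P ∧ x ∣ s * b) : x ∣ b := by
  have hx0' : (x : K) ≠ 0 := fun h => hx0 (Subtype.ext h)
  set z : K := b / x with hz
  by_cases htop : den (E := E) z = ⊤
  · have : (1 : integralClosure E K) ∈ den (E := E) z := htop ▸ trivial
    rw [mem_den] at this
    refine ⟨⟨_, this⟩, Subtype.ext ?_⟩
    push_cast
    rw [hz]; field_simp
  · exfalso
    obtain ⟨M, hM, hle⟩ := Ideal.exists_le_maximal _ htop
    haveI := hM.isPrime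
    obtain ⟨P, hP, -⟩ := Ideal.exists_minimalPrimes_le hle
    have hxP : x ∈ P := hP.1.2 (by
      rw [mem_den, hz]
      have : (x : K) * (b / x) = b := by field_simp
      rw [this]; exact b.2)
    obtain ⟨s, hs, c, hc⟩ := h P (inP_of_minimal z P hP) hxP
    apply hs
    apply hP.1.2
    rw [mem_den]
    have : (s : K) * z = c := by
      have := congrArg (Subtype.val) hc
      push_cast at this
      rw [hz, ← mul_div_assoc, this]; field_simp
    rw [this]; exact c.2

theorem finQ_int {A : Type*} [CommRing A] [IsNoetherianRing A] [Algebra A E] [Algebra A K]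
    [IsScalarTower A E K] (x : E) (hx0 : x ≠ 0)
    (hfin : ∀ P : Ideal (integralClosure E K), InP P → algebraMap E (integralClosure E K) x ∈ P →
      Module.Finite A (integralClosure E K ⧸ P)) :
    FinQ A (Ideal.span {algebraMap E (integralClosure E K) x}) := by
  have hfs := finite_inP (K := K) x hx0
  have hx0' : algebraMap E (integralClosure E K) x ≠ 0 := by
    intro h
    apply hx0
    apply FaithfulSMul.algebraMap_injective E K
    rw [map_zero]
    exact congrArg Subtype.val h
  refine finQ_span hfs.toFinset _ hx0' ?_ ?_ ?_ ?_ ?_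
  · intro P hP; exact ((hfs.mem_toFinset).mp hP).1.1
  · intro P hP; exact ((hfs.mem_toFinset).mp hP).2
  · intro P hP; exact unif_of_inP P ((hfs.mem_toFinset).mp hP).1
  · intro b h
    refine dvd_of_loc _ hx0' b fun P h1 h2 => h P ((hfs.mem_toFinset).mpr ⟨h1, h2⟩)
  · intro P hP; exact hfin P ((hfs.mem_toFinset).mp hP).1 ((hfs.mem_toFinset).mp hP).2
end
section
lemma exists_mul_eq_algebraMap {A G : Type*} [CommRing A] [CommRing G] [IsDomain G] [Algebra A G]
    (g : G) (hg0 : g ≠ 0) (hg : IsIntegral A g) :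
    ∃ (a : A) (g' : G), algebraMap A G a ≠ 0 ∧ g * g' = algebraMap A G a := by
  have h : (Ideal.span {g}).comap (algebraMap (⊥ : Subalgebra A G) G) ≠ ⊥ :=
    Ideal.comap_ne_bot_of_integral_mem hg0 (Ideal.mem_span_singleton_self g) hg.tower_top
  obtain ⟨b, hb, hb0⟩ := Submodule.exists_mem_ne_zero_of_ne_bot h
  obtain ⟨b, hb'⟩ := b
  obtain ⟨a, rfl⟩ := Algebra.mem_bot.mp hb'
  obtain ⟨g', h'⟩ := Ideal.mem_span_singleton.mp (Ideal.mem_comap.mp hb)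
  refine ⟨a, g', fun h => hb0 (Subtype.ext h), h'.symm⟩

lemma isPrecomplete_of_finite {A M : Type*} [CommRing A] (I : Ideal A) [IsPrecomplete I A]
    [AddCommGroup M] [Module A M] [Module.Finite A M] : IsPrecomplete I M := by
  rw [← AdicCompletion.of_surjective_iff]
  intro y
  obtain ⟨x, rfl⟩ := AdicCompletion.ofTensorProduct_surjective_of_finite I M y
  induction x using TensorProduct.induction_on with
  | zero => exact ⟨0, by simp⟩
  | add x y h1 h2 =>
    obtain ⟨a, ha⟩ := h1
    obtain ⟨b, hb⟩ := h2
    exact ⟨a + b, by rw [map_add, map_add, ha, hb]⟩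
  | tmul r m =>
    obtain ⟨a, rfl⟩ := AdicCompletion.of_surjective I A r
    refine ⟨a • m, ?_⟩
    rw [AdicCompletion.ofTensorProduct_tmul]
    ext n
    rw [map_smul]
    rfl

variable {A E K : Type*} [CommRing A] [IsNoetherianRing A] [IsLocalRing A]
  [IsAdicComplete (maximalIdeal A) A]
  [CommRing E] [IsDomain E] [IsNoetherianRing E]
  [Field K] [Algebra E K] [IsFractionRing E K] [Algebra A E] [Module.Finite A E] [Algebra A K]
  [IsScalarTower A E K]

theorem finite_int (y : A) (hy : y ∈ maximalIdeal A) (hy0 : algebraMap A E y ≠ 0)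
    (hfin : ∀ y ∈ maximalIdeal A, algebraMap A E y ≠ 0 → ∀ P : Ideal (integralClosure E K),
      InP P → algebraMap A (integralClosure E K) y ∈ P →
      Module.Finite A (integralClosure E K ⧸ P)) :
    Module.Finite A (integralClosure E K) := by
  have hAED : ∀ a, algebraMap E (integralClosure E K) (algebraMap A E a)
      = algebraMap A (integralClosure E K) a := fun a =>
    (IsScalarTower.algebraMap_apply A E (integralClosure E K) a).symm
  have hfq : ∀ y ∈ maximalIdeal A, algebraMap A E y ≠ 0 →
      FinQ A (Ideal.span {algebraMap A (integralClosure E K) y}) := by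
    intro y hy hy0
    rw [← hAED]
    refine finQ_int _ hy0 fun P h1 h2 => hfin y hy hy0 P h1 ?_
    rwa [← hAED]
  have hInt : Algebra.IsIntegral A (integralClosure E K) := Algebra.IsIntegral.trans E
  have hnoeth : IsNoetherianRing (integralClosure E K) := by
    rw [isNoetherianRing_iff_ideal_fg]
    intro I
    by_cases hI : I = ⊥
    · rw [hI]; exact Submodule.fg_bot
    obtain ⟨g, hgI, hg0⟩ := Submodule.exists_mem_ne_zero_of_ne_bot hI
    obtain ⟨a, g', ha0, hga⟩ := exists_mul_eq_algebraMap g hg0 (hInt.isIntegral g)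
    have haI : algebraMap A (integralClosure E K) a ∈ I := by
      rw [← hga]; exact I.mul_mem_right _ hgI
    by_cases hu : IsUnit a
    · have : I = ⊤ := Ideal.eq_top_of_isUnit_mem _ haI (hu.map _)
      rw [this]; exact ⟨{1}, by simp⟩
    have ham : a ∈ maximalIdeal A := (mem_maximalIdeal a).mpr hu
    have haE : algebraMap A E a ≠ 0 := fun h => ha0 (by rw [← hAED, h, map_zero])
    haveI := (hfq a ham haE).finite
    haveI : IsNoetherian A (integralClosure E K ⧸
      Ideal.span {algebraMap A (integralClosure E K) a}) := inferInstance
    haveI : IsNoetherian (integralClosure E K) (integralClosure E K ⧸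
      Ideal.span {algebraMap A (integralClosure E K) a}) := isNoetherian_of_tower A inferInstance
    refine Submodule.fg_of_fg_map_of_fg_inf_ker
      (Submodule.mkQ (Ideal.span {algebraMap A (integralClosure E K) a}))
      (IsNoetherian.noetherian _) ?_
    rw [Submodule.ker_mkQ, inf_eq_right.mpr]
    · exact ⟨{algebraMap A (integralClosure E K) a}, by simp⟩
    · rw [Ideal.span_singleton_le_iff_mem]; exact haI
  have hne : (maximalIdeal A).map (algebraMap A (integralClosure E K)) ≠ ⊤ := by
    obtain ⟨Q, hQ, hQc⟩ := Ideal.exists_ideal_over_maximal_of_isIntegral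
      (S := integralClosure E K) (maximalIdeal A) (le_maximalIdeal (RingHom.ker_ne_top _))
    intro h
    apply hQ.ne_top
    rw [eq_top_iff, ← h, Ideal.map_le_iff_le_comap, hQc]
  haveI : IsHausdorff (maximalIdeal A) (integralClosure E K) := by
    rw [← IsHausdorff.map_algebraMap_iff (S := integralClosure E K)]
    exact IsHausdorff.of_isDomain _ hne
  obtain ⟨N, hN, h⟩ := hfq y hy hy0
  haveI : Module.Finite A N := Module.Finite.iff_fg.mpr hN
  haveI : IsPrecomplete (maximalIdeal A) N := isPrecomplete_of_finite _
  have hs : Function.Surjective N.subtype := by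
    refine surjective_of_mkQ_comp_surjective (I := maximalIdeal A) ?_
    intro b
    obtain ⟨b, rfl⟩ := Submodule.mkQ_surjective _ b
    obtain ⟨c, hc, hbc⟩ := h b
    refine ⟨⟨c, hc⟩, ?_⟩
    obtain ⟨d, hd⟩ := Ideal.mem_span_singleton.mp hbc
    rw [LinearMap.comp_apply, ← sub_eq_zero, ← map_sub, ← LinearMap.mem_ker, Submodule.ker_mkQ,
      ← neg_mem_iff]
    have : -(N.subtype ⟨c, hc⟩ - b) = y • d := by
      rw [Algebra.smul_def, ← hd]; simp
    rw [this]
    exact Submodule.smul_mem_smul hy trivial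
  exact Module.Finite.of_surjective _ hs

lemma res_gen (P : Ideal (integralClosure E K)) (hIn : InP P) :
    ∃ F : Finset (integralClosure E K ⧸ P), ∀ g, ∃ s : A,
      s ∉ RingHom.ker (algebraMap A (integralClosure E K ⧸ P)) ∧
      s • g ∈ Submodule.span A (F : Set (integralClosure E K ⧸ P)) := by
  haveI := hIn.1
  obtain ⟨N, hN, h⟩ := res_of_inP P hIn
  obtain ⟨F, hF⟩ := (hN.restrictScalars (R := A)).map (Ideal.Quotient.mkₐ A P).toLinearMap
  refine ⟨F, fun g => ?_⟩
  obtain ⟨b, rfl⟩ := Ideal.Quotient.mk_surjective g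
  obtain ⟨s, hs, y, hy, hsy⟩ := h b
  set q := P.comap (algebraMap E (integralClosure E K)) with hq
  have hqs : (Ideal.Quotient.mk q s) ≠ 0 := fun h => hs (by
    have h' : s ∈ q := Ideal.Quotient.eq_zero_iff_mem.mp h
    exact h')
  have hInt : IsIntegral A (Ideal.Quotient.mk q s) :=
    (Algebra.IsIntegral.isIntegral (R := A) s).map (Ideal.Quotient.mkₐ A q)
  obtain ⟨a, t, ha, hat⟩ := exists_mul_eq_algebraMap _ hqs hInt
  obtain ⟨t, rfl⟩ := Ideal.Quotient.mk_surjective t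
  have ha' : algebraMap A (integralClosure E K) a ∉ P := by
    intro h
    apply ha
    change Ideal.Quotient.mk q (algebraMap A E a) = 0
    rw [Ideal.Quotient.eq_zero_iff_mem, hq, Ideal.mem_comap,
      ← IsScalarTower.algebraMap_apply A E (integralClosure E K)]
    exact h
  have hat' : algebraMap E (integralClosure E K) (s * t) - algebraMap A (integralClosure E K) a
      ∈ P := by
    rw [← map_mul] at hat
    change Ideal.Quotient.mk q (s * t) = Ideal.Quotient.mk q (algebraMap A E a) at hat
    rw [Ideal.Quotient.eq, hq, Ideal.mem_comap, map_sub,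
      ← IsScalarTower.algebraMap_apply A E (integralClosure E K)] at hat
    exact hat
  refine ⟨a, ?_, ?_⟩
  · rw [RingHom.mem_ker]
    intro h
    exact ha' (Ideal.Quotient.eq_zero_iff_mem.mp h)
  · rw [hF]
    refine ⟨t • y, N.smul_mem _ hy, ?_⟩
    change Ideal.Quotient.mk P (t • y) = Ideal.Quotient.mk P (a • b)
    rw [Ideal.Quotient.eq]
    have : t • y - a • b = (algebraMap E (integralClosure E K) (s * t) -
        algebraMap A (integralClosure E K) a) * b
        - algebraMap E (integralClosure E K) t *
          (algebraMap E (integralClosure E K) s * b - y) := by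
      rw [Algebra.smul_def, Algebra.smul_def, map_mul]; ring
    rw [this]
    exact P.sub_mem (P.mul_mem_right _ hat') (P.mul_mem_left _ hsy)
end
section
universe u
theorem finite_of_gen {A : Type*} [CommRing A] [IsNoetherianRing A] [IsLocalRing A]
    [IsAdicComplete (maximalIdeal A) A] (p : Ideal A) :
    ∀ (G : Type u) [CommRing G] [IsDomain G] [Algebra A G] [Algebra.IsIntegral A G],
      RingHom.ker (algebraMap A G) = p → ∀ F : Finset G,
      (∀ g : G, ∃ s : A, s ∉ p ∧ s • g ∈ Submodule.span A (F : Set G)) → Module.Finite A G := by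
  induction p using IsNoetherian.induction with
  | hgt p ih =>
  intro G _ _ _ _ hker F hF
  have hple : p ≤ maximalIdeal A := by
    rw [← hker]; exact le_maximalIdeal (RingHom.ker_ne_top _)
  have hinjA : ∀ s : A, s ∉ p → algebraMap A G s ≠ 0 := by
    intro s hs h
    exact hs (by rw [← hker]; exact h)
  by_cases hpm : p = maximalIdeal A
  · refine ⟨⟨F, ?_⟩⟩
    rw [eq_top_iff]
    intro g _
    obtain ⟨s, hs, h⟩ := hF g
    rw [hpm, mem_maximalIdeal, mem_nonunits_iff, not_not] at hs
    obtain ⟨u, rfl⟩ := hs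
    exact (Submodule.smul_mem_iff_of_isUnit _ u.isUnit).mp h
  obtain ⟨y, hy, hyp⟩ : ∃ y ∈ maximalIdeal A, y ∉ p := by
    by_contra! h
    exact hpm (le_antisymm hple h)
  let E : Subalgebra A G := Algebra.adjoin A (F : Set G)
  haveI : Module.Finite A E := Module.Finite.iff_fg.mpr
    (fg_adjoin_of_finite F.finite_toSet fun x _ => Algebra.IsIntegral.isIntegral x)
  haveI : IsNoetherianRing E := IsNoetherianRing.of_finite A E
  have hspan : Submodule.span A (F : Set G) ≤ Subalgebra.toSubmodule E :=
    Submodule.span_le.mpr Algebra.subset_adjoin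
  let K := FractionRing G
  have hinjGK : Function.Injective (algebraMap G K) := IsFractionRing.injective G K
  haveI : IsScalarTower E G K := inferInstance
  have hEK : ∀ e : E, algebraMap E K e = algebraMap G K e := fun e => rfl
  haveI : IsScalarTower A E K := inferInstance
  haveI : FaithfulSMul E K := by
    rw [faithfulSMul_iff_algebraMap_injective]
    intro a b h
    rw [hEK, hEK] at h
    exact Subtype.ext (hinjGK h)
  haveI : IsFractionRing E K := by
    apply IsFractionRing.of_field
    intro z
    obtain ⟨g, h, hh, rfl⟩ := IsFractionRing.div_surjective (A := G) z
    have hh0 : h ≠ 0 := nonZeroDivisors.ne_zero hh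
    obtain ⟨s, hs, hg⟩ := hF g
    obtain ⟨t, ht, hh⟩ := hF h
    refine ⟨⟨t • s • g, E.smul_mem (hspan hg) t⟩, ⟨s • t • h, E.smul_mem (hspan hh) s⟩, ?_⟩
    rw [hEK, hEK]
    have h1 : algebraMap G K (algebraMap A G s) ≠ 0 := fun h0 =>
      hinjA s hs (hinjGK (by rw [h0, map_zero]))
    have h2 : algebraMap G K (algebraMap A G t) ≠ 0 := fun h0 =>
      hinjA t ht (hinjGK (by rw [h0, map_zero]))
    have h3 : algebraMap G K h ≠ 0 := fun h0 => hh0 (hinjGK (by rw [h0, map_zero]))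
    simp only [Algebra.smul_def, map_mul]
    rw [div_eq_div_iff h3 (mul_ne_zero h1 (mul_ne_zero h2 h3))]
    ring
  have hAE : ∀ s : A, s ∉ p → algebraMap A E s ≠ 0 := fun s hs h =>
    hinjA s hs (congrArg Subtype.val h)
  have hAE' : ∀ s : A, s ∈ p → algebraMap A E s = 0 := fun s hs => by
    rw [← hker] at hs
    exact Subtype.ext hs
  have hInt : Algebra.IsIntegral A (integralClosure E K) := Algebra.IsIntegral.trans E
  have hD : Module.Finite A (integralClosure E K) := by
    refine finite_int y hy (hAE y hyp) ?_
    intro y hy hy0 P hIn hyP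
    haveI := hIn.1
    obtain ⟨F', hF'⟩ := res_gen (A := A) P hIn
    haveI : Algebra.IsIntegral A (integralClosure E K ⧸ P) :=
      Algebra.IsIntegral.of_surjective (Ideal.Quotient.mkₐ A P) Ideal.Quotient.mk_surjective
    refine ih (RingHom.ker (algebraMap A (integralClosure E K ⧸ P))) ?_ _ rfl F' hF'
    refine lt_of_le_of_ne ?_ ?_
    · intro s hs
      rw [RingHom.mem_ker, IsScalarTower.algebraMap_apply A E, hAE' s hs, map_zero]
    · intro h
      apply hy0
      apply hAE'
      rw [h, RingHom.mem_ker]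
      exact Ideal.Quotient.eq_zero_iff_mem.mpr hyP
  let f : G →ₗ[A] integralClosure E K :=
    { toFun := fun g => ⟨algebraMap G K g,
        (((Algebra.IsIntegral.isIntegral (R := A) g).tower_top (A := E)).map
          (IsScalarTower.toAlgHom E G K))⟩
      map_add' := fun a b => Subtype.ext (map_add _ _ _)
      map_smul' := fun a b => Subtype.ext (by
        change algebraMap G K (a • b) = a • algebraMap G K b
        exact map_smul (IsScalarTower.toAlgHom A G K) a b) }
  exact Module.Finite.of_injective f fun a b h => hinjGK (congrArg Subtype.val h)
end

section
variable {A B : Type*} [CommRing A] [IsNoetherianRing A] [IsLocalRing A]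
  [IsAdicComplete (maximalIdeal A) A] [CommRing B] [IsDomain B] [Algebra A B] [Module.Finite A B]

lemma complete_map : IsAdicComplete ((maximalIdeal A).map (algebraMap A B)) B := by
  haveI : IsNoetherianRing B := IsNoetherianRing.of_finite A B
  have hne : (maximalIdeal A).map (algebraMap A B) ≠ ⊤ := by
    obtain ⟨Q, hQ, hQc⟩ := Ideal.exists_ideal_over_maximal_of_isIntegral
      (S := B) (maximalIdeal A) (le_maximalIdeal (RingHom.ker_ne_top _))
    intro h
    apply hQ.ne_top
    rw [eq_top_iff, ← h, Ideal.map_le_iff_le_comap, hQc]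
  haveI : IsHausdorff ((maximalIdeal A).map (algebraMap A B)) B := IsHausdorff.of_isDomain _ hne
  haveI : IsPrecomplete ((maximalIdeal A).map (algebraMap A B)) B := by
    rw [IsPrecomplete.map_algebraMap_iff]
    exact isPrecomplete_of_finite _
  exact {}

lemma unit_or_pow_mem (x : B) :
    IsUnit x ∨ ∃ n, x ^ n ∈ (maximalIdeal A).map (algebraMap A B) := by
  set J := (maximalIdeal A).map (algebraMap A B) with hJ
  haveI : IsAdicComplete J B := complete_map
  haveI : IsArtinian A (B ⧸ J) := by
    refine isArtinian_of_pow_smul 1 ?_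
    intro a ha y
    obtain ⟨b, rfl⟩ := Ideal.Quotient.mk_surjective y
    change Ideal.Quotient.mk J (a • b) = 0
    rw [Ideal.Quotient.eq_zero_iff_mem, Algebra.smul_def]
    refine J.mul_mem_right _ (Ideal.mem_map_of_mem _ (by simpa using ha))
  haveI : IsArtinian B (B ⧸ J) := isArtinian_of_tower A inferInstance
  obtain ⟨n, w, hw⟩ := IsArtinian.exists_pow_succ_smul_dvd (M := B ⧸ J) x 1
  obtain ⟨y, rfl⟩ := Ideal.Quotient.mk_surjective w
  have h1 : x ^ (n + 1) * y - x ^ n ∈ J := by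
    rw [← Ideal.Quotient.eq]
    have hw' : Ideal.Quotient.mk J (x ^ (n + 1) * y) = Ideal.Quotient.mk J (x ^ n * 1) := hw
    rw [hw', mul_one]
  set q := Ideal.Quotient.mk J with hq
  have hjac : J ≤ Ideal.jacobson ⊥ := IsAdicComplete.le_jacobson_bot J
  have h2 : ∀ k, (q x) ^ (n + k) * (q y) ^ k = (q x) ^ n := by
    intro k
    induction k with
    | zero => simp
    | succ k ihk =>
      have h1' : (q x) ^ (n + 1) * q y = (q x) ^ n := by
        rw [← map_pow, ← map_pow, ← map_mul, hq, Ideal.Quotient.eq]; exact h1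
      calc (q x) ^ (n + (k + 1)) * (q y) ^ (k + 1)
          = ((q x) ^ (n + 1) * q y) * ((q x) ^ k * (q y) ^ k) := by ring
        _ = (q x) ^ (n + k) * (q y) ^ k := by rw [h1']; ring
        _ = _ := ihk
  set N := n + 1 with hN
  have h3 : (q x) ^ N * ((q x) ^ N * (q y) ^ N) = (q x) ^ N := by
    have := h2 N
    calc (q x) ^ N * ((q x) ^ N * (q y) ^ N) = (q x) * ((q x) ^ (n + N) * (q y) ^ N) := by
          rw [hN]; ring
      _ = _ := by rw [this, hN]; ring
  set e := x ^ N * y ^ N with he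
  have hqe : q e = (q x) ^ N * (q y) ^ N := by rw [he, map_mul, map_pow, map_pow]
  have hidem : q e * q e = q e := by
    calc q e * q e = ((q x) ^ N * ((q x) ^ N * (q y) ^ N)) * (q y) ^ N := by rw [hqe]; ring
      _ = _ := by rw [h3, hqe]
  obtain ⟨e', hroot, he'⟩ := HenselianRing.is_henselian (I := J)
    (Polynomial.X ^ 2 - Polynomial.X : Polynomial B)
    (by monicity!) e (by
      simp only [Polynomial.eval_sub, Polynomial.eval_pow, Polynomial.eval_X]
      rw [← Ideal.Quotient.eq, map_pow, sq]; exact hidem) (by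
      simp only [Polynomial.derivative_sub, Polynomial.derivative_X_pow, Polynomial.derivative_X]
      refine IsUnit.of_mul_eq_one (2 * q e - 1) ?_
      have h2' : (Ideal.Quotient.mk J) 2 = 2 := map_ofNat _ 2
      simp [h2']
      linear_combination 4 * hidem)
  have hroot' : e' * (e' - 1) = 0 := by
    have : e' ^ 2 - e' = 0 := by simpa [Polynomial.IsRoot] using hroot
    rw [← this]; ring
  rcases mul_eq_zero.mp hroot' with h | h
  · right
    refine ⟨N, ?_⟩
    rw [h, zero_sub, neg_mem_iff] at he'
    rw [← Ideal.Quotient.eq_zero_iff_mem, map_pow, ← hq, ← h3, ← hqe, hq,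
      Ideal.Quotient.eq_zero_iff_mem.mpr he', mul_zero]
  · left
    rw [sub_eq_zero] at h
    have hu : IsUnit e := by
      have := (Ideal.mem_jacobson_bot.mp (hjac he')) (-1)
      rw [h] at this
      simpa using this
    rw [he, hN, pow_succ', mul_assoc] at hu
    exact isUnit_of_mul_isUnit_left hu

lemma local_complete (A B : Type*) [CommRing A] [IsNoetherianRing A] [IsLocalRing A]
    [IsAdicComplete (maximalIdeal A) A] [CommRing B] [IsDomain B] [Algebra A B]
    [Module.Finite A B] :
    ∃ h : IsLocalRing B, IsAdicComplete (@maximalIdeal _ _ h) B := by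
  haveI : IsNoetherianRing B := IsNoetherianRing.of_finite A B
  set J := (maximalIdeal A).map (algebraMap A B) with hJ
  haveI hJc : IsAdicComplete J B := complete_map
  have hjac : J ≤ Ideal.jacobson ⊥ := IsAdicComplete.le_jacobson_bot J
  have hloc : IsLocalRing B := by
    refine IsLocalRing.of_isUnit_or_isUnit_one_sub_self fun x => ?_
    rcases unit_or_pow_mem (A := A) x with h | ⟨n, hn⟩
    · exact Or.inl h
    · right
      have h1 := (Ideal.mem_jacobson_bot.mp (hjac hn)) (-1)
      have h2 : (1 - x) ∣ 1 ^ n - x ^ n := sub_dvd_pow_sub_pow 1 x n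
      refine isUnit_of_dvd_unit h2 ?_
      have h3 : (1 : B) ^ n - x ^ n = x ^ n * (-1) + 1 := by rw [one_pow]; ring
      rw [h3]; exact h1
  refine ⟨hloc, ?_⟩
  have hJm : J ≤ maximalIdeal B := by
    refine le_maximalIdeal ?_
    intro h
    have h1 : (1 : B) ∈ J := h ▸ trivial
    have h2 := (Ideal.mem_jacobson_bot.mp (hjac h1)) (-1)
    simp at h2
  have hrad : maximalIdeal B ≤ J.radical := by
    intro x hx
    rcases unit_or_pow_mem (A := A) x with h | h
    · exact absurd h hx
    · exact h
  obtain ⟨k, hk⟩ := Ideal.exists_pow_le_of_le_radical_of_fg hrad (IsNoetherian.noetherian _)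
  haveI : IsHausdorff (maximalIdeal B) B := IsHausdorff.of_isDomain _ Ideal.IsPrime.ne_top'
  haveI : IsPrecomplete (maximalIdeal B) B := by
    constructor
    intro f hf
    have hk' : maximalIdeal B ^ (k + 1) ≤ J := (Ideal.pow_le_pow_right (by omega)).trans hk
    have hpow : ∀ n, maximalIdeal B ^ ((k + 1) * n) ≤ J ^ n := fun n => by
      rw [pow_mul]; exact Ideal.pow_right_mono hk' n
    obtain ⟨L, hL⟩ := IsPrecomplete.prec hJc.toIsPrecomplete
      (f := fun n => f ((k + 1) * n)) (by
        intro m n hmn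
        have := @hf ((k + 1) * m) ((k + 1) * n) (Nat.mul_le_mul_left _ hmn)
        refine this.mono ?_
        exact Submodule.smul_mono_left (hpow m))
    refine ⟨L, fun n => ?_⟩
    have h1 := @hf n ((k + 1) * n) (Nat.le_mul_of_pos_left n (by omega))
    refine h1.trans ((hL n).mono ?_)
    exact Submodule.smul_mono_left (Ideal.pow_right_mono hJm n)
  exact {}
end

end MN

/-- Let `A` be a Noetherian complete local domain. Then the integral
closure `Ā` of `A` in its field of fractions is a finite `A`-module, and `Ā` is itself
a Noetherian complete local domain (complete with respect to the adic topology of its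
maximal ideal). -/
theorem integralClosure_of_complete_local_domain
    (A : Type*) [CommRing A] [IsDomain A] [IsNoetherianRing A] [IsLocalRing A]
    [IsAdicComplete (IsLocalRing.maximalIdeal A) A] :
    Module.Finite A (integralClosure A (FractionRing A)) ∧
      IsNoetherianRing (integralClosure A (FractionRing A)) ∧
      IsDomain (integralClosure A (FractionRing A)) ∧
      ∃ h : IsLocalRing (integralClosure A (FractionRing A)),
        IsAdicComplete (@IsLocalRing.maximalIdeal _ _ h)
          (integralClosure A (FractionRing A)) := by
  have hinj : Function.Injective (algebraMap A (FractionRing A)) := IsFractionRing.injective A _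
  have hker : RingHom.ker (algebraMap A (integralClosure A (FractionRing A))) = ⊥ := by
    rw [eq_bot_iff]
    intro a ha
    have h : algebraMap A (FractionRing A) a = 0 := congrArg Subtype.val ha
    exact hinj (by rw [h, map_zero])
  haveI hfin : Module.Finite A (integralClosure A (FractionRing A)) := by
    refine MN.finite_of_gen ⊥ _ hker {1} fun g => ?_
    obtain ⟨a, b, hb, h⟩ := IsFractionRing.div_surjective (A := A) (g : FractionRing A)
    have hb0 : b ≠ 0 := nonZeroDivisors.ne_zero hb
    refine ⟨b, hb0, ?_⟩
    have hb1 : algebraMap A (FractionRing A) b ≠ 0 := fun h0 => hb0 (hinj (by rw [h0, map_zero]))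
    have : b • g = a • (1 : integralClosure A (FractionRing A)) := by
      apply Subtype.ext
      change b • (g : FractionRing A) = a • (1 : FractionRing A)
      rw [← h, Algebra.smul_def, Algebra.smul_def, mul_one]
      field_simp
    rw [this]
    exact Submodule.smul_mem _ _ (Submodule.subset_span (by simp))
  exact ⟨hfin, IsNoetherianRing.of_finite A _, inferInstance, MN.local_complete A _⟩
end
end

section
/- Let K be a field, let R be a finitely generated commutative K-algebra, let I ⊆ R be an ideal, and let R̂ denote the I-adic completion of R. Then for every ideal J ⊆ R, the radical of the extended ideal J·R̂ equals the extension (√J)·R̂ of the radical of J. In particular, if J is a radical ideal of R, then J·R̂ is a radical ideal of R̂. -/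
set_option synthInstance.maxHeartbeats 1000000
set_option maxHeartbeats 1000000

noncomputable section

section Helpers
open Polynomial

theorem N2_of_sep {B D L M : Type*} [CommRing B] [IsDomain B] [IsNoetherianRing B]
    [CommRing D] [IsDomain D] [Field L] [Field M] [Algebra B D] [Algebra D L] [Algebra L M]
    [Algebra B L] [Algebra B M] [Algebra D M] [IsScalarTower B D L] [IsScalarTower B L M]
    [IsScalarTower D L M] [IsScalarTower B D M] [IsFractionRing D L] [Algebra.IsIntegral B D]
    (B' : Subalgebra B M) [Module.Finite B B'] [IsIntegrallyClosed B'] (S : Set D) (hS : S.Finite)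
    (hgen : Algebra.adjoin B S = ⊤)
    (hsep : ∀ a ∈ S, ∃ h : B'[X], (h.map (algebraMap B' M)).Separable ∧
      aeval (algebraMap D M a) h = 0) :
    Module.Finite D (integralClosure D L) := by
  have hN : IsNoetherianRing B' := IsNoetherianRing.of_finite B B'
  let F := FractionRing B'
  let _ : Algebra F M := FractionRing.liftAlgebra B' M
  have : IsScalarTower B' F M := FractionRing.isScalarTower_liftAlgebra B' M
  let S' : Set M := algebraMap D M '' S
  have hS' : S'.Finite := hS.image _
  let E := IntermediateField.adjoin F S'
  have hsepS : ∀ x ∈ S', IsSeparable F x := by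
    rintro _ ⟨a, ha, rfl⟩
    obtain ⟨h, h1, h2⟩ := hsep a ha
    have h3 : (h.map (algebraMap B' F)).Separable := by
      rw [← Polynomial.separable_map (algebraMap F M), Polynomial.map_map,
        ← IsScalarTower.algebraMap_eq]
      exact h1
    refine h3.of_dvd (minpoly.dvd F _ ?_)
    rw [aeval_map_algebraMap, h2]
  have : Algebra.IsSeparable F E := (IntermediateField.isSeparable_adjoin_iff_isSeparable F M).2 hsepS
  have : Finite S' := hS'
  have : FiniteDimensional F E :=
    IntermediateField.finiteDimensional_adjoin fun x hx => (hsepS x hx).isIntegral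
  have : IsScalarTower B' E M := IsScalarTower.of_algebraMap_eq fun x => by
    rw [IsScalarTower.algebraMap_apply B' F E, ← IsScalarTower.algebraMap_apply F E M,
      ← IsScalarTower.algebraMap_apply B' F M]
  let C := integralClosure B' E
  have hC : Module.Finite B' C := IsIntegralClosure.finite B' F E C
  let ι : C →ₗ[B'] M := (IsScalarTower.toAlgHom B' E M).toLinearMap.comp C.val.toLinearMap
  let N0 : Submodule B' M := LinearMap.range ι
  have hN0 : Module.Finite B' N0 := inferInstance
  have hN1 : Module.Finite B (N0.restrictScalars B) := by
    have : Module.Finite B' (N0.restrictScalars B) := hN0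
    exact Module.Finite.trans B' _
  have hDE : ∀ d : D, algebraMap D M d ∈ E := by
    intro d
    have hd : d ∈ Algebra.adjoin B S := by rw [hgen]; trivial
    induction hd using Algebra.adjoin_induction with
    | mem x hx => exact IntermediateField.subset_adjoin _ _ ⟨x, hx, rfl⟩
    | algebraMap r =>
      rw [← IsScalarTower.algebraMap_apply B D M]
      have : algebraMap B M r = algebraMap F M (algebraMap B' F (algebraMap B B' r)) := by
        rw [← IsScalarTower.algebraMap_apply B' F M]; rfl
      rw [this]
      exact E.algebraMap_mem _
    | add x y _ _ hx hy => rw [map_add]; exact add_mem hx hy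
    | mul x y _ _ hx hy => rw [map_mul]; exact mul_mem hx hy
  have hmem : ∀ x ∈ (Subalgebra.toSubmodule (integralClosure D L)).restrictScalars B,
      (IsScalarTower.toAlgHom B L M).toLinearMap x ∈ N0.restrictScalars B := by
    intro x hx
    have hxD : IsIntegral D x := hx
    have hxB : IsIntegral B x := isIntegral_trans x hxD
    have hxE : algebraMap L M x ∈ E := by
      obtain ⟨u, v, hv, rfl⟩ := IsFractionRing.div_surjective (A := D) x
      rw [map_div₀, ← IsScalarTower.algebraMap_apply, ← IsScalarTower.algebraMap_apply]
      exact div_mem (hDE _) (hDE _)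
    have hxM : IsIntegral B' (algebraMap L M x) := by
      have : IsIntegral B (algebraMap L M x) := hxB.map (IsScalarTower.toAlgHom B L M)
      exact this.tower_top
    have hxC : IsIntegral B' (⟨_, hxE⟩ : E) := by
      rw [← isIntegral_algebraMap_iff (A := E) (B := M) (FaithfulSMul.algebraMap_injective E M)]
      exact hxM
    exact ⟨⟨⟨_, hxE⟩, hxC⟩, rfl⟩
  have hNB : IsNoetherian B (N0.restrictScalars B) := isNoetherian_of_isNoetherianRing_of_finite _ _
  have : Module.Finite B ((Subalgebra.toSubmodule (integralClosure D L)).restrictScalars B) := by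
    refine Module.Finite.of_injective ((IsScalarTower.toAlgHom B L M).toLinearMap.restrict hmem) ?_
    intro x y h
    have h3 : algebraMap L M x = algebraMap L M y := congrArg Subtype.val h
    exact Subtype.ext ((algebraMap L M).injective h3)
  have h4 : Module.Finite B (integralClosure D L) := this
  exact Module.Finite.of_restrictScalars_finite B D _

theorem exists_B' {K M : Type*} [Field K] [Field M] [IsAlgClosed M] (p : ℕ) [ExpChar K p] (s : ℕ)
    [Algebra K M] [Algebra (MvPolynomial (Fin s) K) M] [IsScalarTower K (MvPolynomial (Fin s) K) M]
    (hinj : Function.Injective (algebraMap (MvPolynomial (Fin s) K) M))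
    (e : ℕ) (T : Finset (MvPolynomial (Fin s) K)) :
    ∃ B' : Subalgebra (MvPolynomial (Fin s) K) M, Module.Finite (MvPolynomial (Fin s) K) B' ∧
      IsIntegrallyClosed B' ∧
      ∀ b ∈ T, ∃ b' : M, b' ∈ B' ∧ b' ^ (p ^ e) = algebraMap (MvPolynomial (Fin s) K) M b := by
  have : ExpChar M p := expChar_of_injective_algebraMap (algebraMap K M).injective p
  have hq : 0 < p ^ e := pow_pos (expChar_pos K p) e
  choose root hroot using fun x : M => IsAlgClosed.exists_pow_nat_eq x hq
  let Cs : Set M := ⋃ b ∈ T, (fun α => root (algebraMap K M (MvPolynomial.coeff α b))) '' b.support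
  have hCs : Cs.Finite := T.finite_toSet.biUnion fun b _ => b.support.finite_toSet.image _
  let y : Fin s → M := fun i => root (algebraMap (MvPolynomial (Fin s) K) M (MvPolynomial.X i))
  have hroot_int : ∀ b : (MvPolynomial (Fin s) K), IsIntegral (MvPolynomial (Fin s) K) (root (algebraMap (MvPolynomial (Fin s) K) M b)) := by
    intro b
    refine IsIntegral.of_pow hq ?_
    rw [hroot]; exact isIntegral_algebraMap
  have hrootK : ∀ c : K, IsIntegral K (root (algebraMap K M c)) := by
    intro c
    refine IsIntegral.of_pow hq ?_
    rw [hroot]; exact isIntegral_algebraMap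
  have hCsK : ∀ x ∈ Cs, IsIntegral K x := by
    intro x hx
    simp only [Cs, Set.mem_iUnion] at hx
    obtain ⟨b, hb, α, hα, rfl⟩ := hx
    exact hrootK _
  let K' := IntermediateField.adjoin K Cs
  let B' : Subalgebra (MvPolynomial (Fin s) K) M := Algebra.adjoin (MvPolynomial (Fin s) K) (Cs ∪ Set.range y)
  have hKB : ∀ k ∈ K', k ∈ B' := by
    intro k hk
    have h1 : K'.toSubalgebra = Algebra.adjoin K Cs :=
      IntermediateField.adjoin_toSubalgebra_of_isAlgebraic fun x hx => (hCsK x hx).isAlgebraic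
    have h2 : k ∈ Algebra.adjoin K Cs := by rw [← h1]; exact hk
    have h3 : Algebra.adjoin K Cs ≤ B'.restrictScalars K :=
      Algebra.adjoin_le fun x hx => Algebra.subset_adjoin (Or.inl hx)
    exact h3 h2
  have hyB' : ∀ i, y i ∈ B' := fun i => Algebra.subset_adjoin (Or.inr ⟨i, rfl⟩)
  let φ : MvPolynomial (Fin s) K' →ₐ[K'] M := MvPolynomial.aeval y
  have hφB' : ∀ P, φ P ∈ B' := by
    intro P
    induction P using MvPolynomial.induction_on with
    | C a => rw [MvPolynomial.aeval_C]; exact hKB _ a.2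
    | add P Q hP hQ => rw [map_add]; exact add_mem hP hQ
    | mul_X P i hP => rw [map_mul, MvPolynomial.aeval_X]; exact mul_mem hP (hyB' i)
  have hBφ : ∀ b : (MvPolynomial (Fin s) K), algebraMap (MvPolynomial (Fin s) K) M b ∈ φ.range := by
    intro b
    induction b using MvPolynomial.induction_on with
    | C a =>
      have : algebraMap (MvPolynomial (Fin s) K) M (MvPolynomial.C a) = algebraMap K' M (algebraMap K K' a) := by
        rw [← IsScalarTower.algebraMap_apply K K' M, IsScalarTower.algebraMap_apply K (MvPolynomial (Fin s) K) M]; rfl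
      rw [this]; exact φ.range.algebraMap_mem _
    | add P Q hP hQ => rw [map_add]; exact add_mem hP hQ
    | mul_X P i hP =>
      rw [map_mul]
      refine mul_mem hP ?_
      rw [← hroot (algebraMap (MvPolynomial (Fin s) K) M (MvPolynomial.X i))]
      have hy : y i ∈ φ.range := ⟨MvPolynomial.X i, MvPolynomial.aeval_X _ _⟩
      exact pow_mem hy _
  have hBpφ : ∀ z ∈ B', z ∈ φ.range := by
    intro z hz
    induction hz using Algebra.adjoin_induction with
    | mem x hx =>
      rcases hx with hx | ⟨i, rfl⟩
      · exact φ.range.algebraMap_mem (⟨x, IntermediateField.subset_adjoin _ _ hx⟩ : K')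
      · exact ⟨MvPolynomial.X i, MvPolynomial.aeval_X _ _⟩
    | algebraMap r => exact hBφ r
    | add x y _ _ hx hy => exact add_mem hx hy
    | mul x y _ _ hx hy => exact mul_mem hx hy
  have hind : AlgebraicIndependent K (fun i => algebraMap (MvPolynomial (Fin s) K) M (MvPolynomial.X i)) := by
    have : (MvPolynomial.aeval (fun i => algebraMap (MvPolynomial (Fin s) K) M (MvPolynomial.X i)) : (MvPolynomial (Fin s) K) →ₐ[K] M) =
        IsScalarTower.toAlgHom K (MvPolynomial (Fin s) K) M := by
      ext i; simp
    unfold AlgebraicIndependent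
    rw [this]
    exact hinj
  have : Algebra.IsAlgebraic K K' := by
    exact IntermediateField.isAlgebraic_adjoin hCsK
  have hind' : AlgebraicIndependent K' (fun i => algebraMap (MvPolynomial (Fin s) K) M (MvPolynomial.X i)) :=
    hind.extendScalars K'
  have : ExpChar K' p := expChar_of_injective_algebraMap (algebraMap K K').injective p
  have hφinj : Function.Injective φ := by
    rw [injective_iff_map_eq_zero]
    intro P hP
    have h1 : iterateFrobenius M p e (φ P) = MvPolynomial.aeval
        (fun i => algebraMap (MvPolynomial (Fin s) K) M (MvPolynomial.X i)) (MvPolynomial.map (iterateFrobenius K' p e) P) := by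
      have : φ P = MvPolynomial.eval₂ (algebraMap K' M) y P := rfl
      rw [this, MvPolynomial.eval₂_comp_left, MvPolynomial.aeval_def, MvPolynomial.eval₂_map]
      congr 1
      · funext i; simp [iterateFrobenius_def, y, hroot]
    rw [hP, map_zero] at h1
    have h2 := hind'.eq_zero_of_aeval_eq_zero _ h1.symm
    exact (map_eq_zero_iff _ (MvPolynomial.map_injective _ (iterateFrobenius K' p e).injective)).1 h2
  let ψ : MvPolynomial (Fin s) K' →+* B' := φ.toRingHom.codRestrict B' hφB'
  have hψ : Function.Bijective ψ := by
    refine ⟨fun a b h => hφinj (congrArg Subtype.val h), fun z => ?_⟩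
    obtain ⟨P, hP⟩ := hBpφ z z.2
    exact ⟨P, Subtype.ext hP⟩
  refine ⟨B', ?_, ?_, ?_⟩
  · refine Algebra.finite_adjoin_of_finite_of_isIntegral (hCs.union (Set.finite_range y)) ?_
    rintro x (hx | ⟨i, rfl⟩)
    · exact (hCsK x hx).tower_top
    · exact hroot_int _
  · exact IsIntegrallyClosed.of_equiv (RingEquiv.ofBijective ψ hψ)
  · intro b hb
    refine ⟨∑ α ∈ b.support, root (algebraMap K M (MvPolynomial.coeff α b)) * ∏ i, y i ^ α i, ?_, ?_⟩
    · refine sum_mem fun α hα => mul_mem (Algebra.subset_adjoin (Or.inl ?_))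
        (prod_mem fun i _ => pow_mem (hyB' i) _)
      simp only [Cs, Set.mem_iUnion]
      exact ⟨b, hb, α, hα, rfl⟩
    · rw [← iterateFrobenius_def, map_sum]
      conv_rhs => rw [MvPolynomial.as_sum b, map_sum]
      refine Finset.sum_congr rfl fun α hα => ?_
      rw [map_mul, map_prod, iterateFrobenius_def, hroot, MvPolynomial.monomial_eq, map_mul,
        Finsupp.prod_fintype _ _ (by simp), map_prod]
      congr 1
      · rw [IsScalarTower.algebraMap_apply K (MvPolynomial (Fin s) K) M]; rfl
      · refine Finset.prod_congr rfl fun i _ => ?_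
        rw [map_pow, map_pow, iterateFrobenius_def, hroot]

theorem exists_contraction {B D L M : Type*} [CommRing B] [IsDomain B] [IsIntegrallyClosed B]
    [CommRing D] [IsDomain D] [Field L] [Field M] [Algebra B D] [Algebra D L] [Algebra L M]
    [Algebra B L] [Algebra B M] [Algebra D M] [IsScalarTower B D L] [IsScalarTower B L M]
    [IsScalarTower D L M] [IsScalarTower B D M] [IsFractionRing D L] [Algebra.IsIntegral B D]
    (hinj : Function.Injective (algebraMap B L))
    (p : ℕ) [ExpChar B p] (a : D) :
    ∃ (e : ℕ) (g : B[X]), (g.map (algebraMap B M)).Separable ∧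
      (g.map (algebraMap B M)).eval (algebraMap D M a ^ (p ^ e)) = 0 := by
  have : FaithfulSMul B L := (faithfulSMul_iff_algebraMap_injective B L).2 hinj
  let F := FractionRing B
  let _ : Algebra F L := FractionRing.liftAlgebra B L
  have : IsScalarTower B F L := FractionRing.isScalarTower_liftAlgebra B L
  have : ExpChar F p := expChar_of_injective_algebraMap (IsFractionRing.injective B F) p
  have ha : IsIntegral B a := Algebra.IsIntegral.isIntegral a
  have hmin := minpoly.isIntegrallyClosed_eq_field_fractions F L ha
  have haL : IsIntegral F (algebraMap D L a) :=
    (ha.map (IsScalarTower.toAlgHom B D L)).tower_top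
  obtain ⟨g, hg, e, hge⟩ := (minpoly.irreducible haL).hasSeparableContraction p
  have hq : p ^ e ≠ 0 := (pow_pos (expChar_pos F p) e).ne'
  have hgB : (contract (p ^ e) (minpoly B a)).map (algebraMap B F) = g := by
    rw [map_contract hq, ← hmin, ← hge, contract_expand _ hq]
  refine ⟨e, contract (p ^ e) (minpoly B a), ?_, ?_⟩
  · rw [IsScalarTower.algebraMap_eq B L M, IsScalarTower.algebraMap_eq B F L, ← Polynomial.map_map,
      ← Polynomial.map_map, hgB, Polynomial.separable_map, Polynomial.separable_map]
    exact hg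
  · have h1 : aeval (algebraMap D L a ^ (p ^ e)) g = 0 := by
      rw [← expand_aeval, hge, minpoly.aeval]
    rw [IsScalarTower.algebraMap_eq B L M, IsScalarTower.algebraMap_eq B F L, ← Polynomial.map_map,
      ← Polynomial.map_map, hgB, IsScalarTower.algebraMap_apply D L M, ← map_pow, eval_map_apply,
      eval_map_algebraMap, h1, map_zero]

theorem N2_aux (K D L M : Type*) [Field K] [Field M] [IsAlgClosed M] [CommRing D] [IsDomain D] [Algebra K D]
    [Algebra.FiniteType K D] [Field L] [Algebra L M] [Algebra D L] [IsFractionRing D L] :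
    Module.Finite D (integralClosure D L) := by
  obtain ⟨s, φ, hφ, hfin⟩ := exists_finite_inj_algHom_of_fg K D
  obtain ⟨p, hp⟩ := ExpChar.exists K
  let B := MvPolynomial (Fin s) K
  let _ : Algebra B D := φ.toRingHom.toAlgebra
  let _ : Algebra B L := ((algebraMap D L).comp (algebraMap B D)).toAlgebra
  have t1 : IsScalarTower B D L := IsScalarTower.of_algebraMap_eq' rfl
  let _ : Algebra B M := ((algebraMap L M).comp (algebraMap B L)).toAlgebra
  have t2 : IsScalarTower B L M := IsScalarTower.of_algebraMap_eq' rfl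
  let _ : Algebra D M := ((algebraMap L M).comp (algebraMap D L)).toAlgebra
  have t3 : IsScalarTower D L M := IsScalarTower.of_algebraMap_eq' rfl
  have t4 : IsScalarTower B D M := IsScalarTower.of_algebraMap_eq' rfl
  let _ : Algebra K M := ((algebraMap B M).comp (algebraMap K B)).toAlgebra
  have t5 : IsScalarTower K B M := IsScalarTower.of_algebraMap_eq' rfl
  have hBD : Module.Finite B D := hfin
  have hinjL : Function.Injective (algebraMap B L) := (IsFractionRing.injective D L).comp hφ
  have hinjM : Function.Injective (algebraMap B M) := (algebraMap L M).injective.comp hinjL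
  have hpB : ExpChar B p := expChar_of_injective_algebraMap (FaithfulSMul.algebraMap_injective K B) p
  have hpM : ExpChar M p := expChar_of_injective_algebraMap (algebraMap K M).injective p
  obtain ⟨S, hS⟩ := (inferInstance : Algebra.FiniteType B D).out
  choose e g hg1 hg2 using fun a : D => exists_contraction (L := L) (M := M) hinjL p a
  classical
  obtain ⟨B', hB'1, hB'2, hBp3⟩ := exists_B' p s hinjM (S.sup e) (S.biUnion fun a => (g a).coeffs)
  refine N2_of_sep (B := B) (M := M) B' S S.finite_toSet hS ?_
  intro a ha
  let f : B' →+* M := (iterateFrobenius M p (e a)).comp (algebraMap B' M)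
  have hl : (g a).map (algebraMap B M) ∈ lifts f := by
    rw [lifts_iff_coeff_lifts]
    intro n
    rw [coeff_map]
    by_cases h0 : (g a).coeff n = 0
    · rw [h0, map_zero]; exact ⟨0, map_zero f⟩
    · obtain ⟨b', hb', hb⟩ := hBp3 ((g a).coeff n)
        (Finset.mem_biUnion.2 ⟨a, ha, coeff_mem_coeffs h0⟩)
      have hle : e a ≤ S.sup e := Finset.le_sup ha
      refine ⟨⟨b', hb'⟩ ^ (p ^ (S.sup e - e a)), ?_⟩
      rw [← hb]
      simp only [f, RingHom.comp_apply, iterateFrobenius_def, map_pow]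
      rw [← pow_mul, ← pow_add, Nat.add_sub_cancel' hle]
      rfl
  obtain ⟨h, hh⟩ := (mem_lifts _).1 hl
  refine ⟨h, ?_, ?_⟩
  · rw [← Polynomial.separable_map (iterateFrobenius M p (e a)), Polynomial.map_map]
    change (h.map f).Separable
    rw [hh]; exact hg1 a
  · apply (iterateFrobenius M p (e a)).injective
    rw [map_zero, ← hg2 a, ← hh, aeval_def, hom_eval₂, eval_map, iterateFrobenius_def]

theorem N2 (K D L : Type*) [Field K] [CommRing D] [IsDomain D] [Algebra K D]
    [Algebra.FiniteType K D] [Field L] [Algebra D L] [IsFractionRing D L] :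
    Module.Finite D (integralClosure D L) :=
  N2_aux K D L (AlgebraicClosure L)

theorem rees_bound {A : Type*} [CommRing A] (I : Ideal A)
    (hfin : Module.Finite (reesAlgebra I) (integralClosure (reesAlgebra I) A[X])) :
    ∃ c, ∀ n a, a ^ 2 ∈ I ^ (2 * n) → a ∈ I ^ (n - c) := by
  obtain ⟨s, hs⟩ := hfin.fg_top
  refine ⟨s.sup fun y => (y : A[X]).natDegree, fun n a ha => ?_⟩
  set c := s.sup fun y => (y : A[X]).natDegree with hc
  have key : ∀ y : integralClosure (reesAlgebra I) A[X], ∀ i, (y : A[X]).coeff i ∈ I ^ (i - c) := by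
    intro y
    have hy : y ∈ Submodule.span (reesAlgebra I) (s : Set (integralClosure (reesAlgebra I) A[X])) := by
      rw [hs]; trivial
    induction hy using Submodule.span_induction with
    | mem y hy =>
      intro i
      by_cases hi : i ≤ c
      · simp [Nat.sub_eq_zero_of_le hi]
      · rw [coeff_eq_zero_of_natDegree_lt]
        · exact zero_mem _
        · have : (y : A[X]).natDegree ≤ c :=
            Finset.le_sup (f := fun y : integralClosure (reesAlgebra I) A[X] => (y : A[X]).natDegree) hy
          omega
    | zero => intro i; simp
    | add x y _ _ hx hy => intro i; simpa using add_mem (hx i) (hy i)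
    | smul r x _ hx =>
      intro i
      have : ((r • x : integralClosure (reesAlgebra I) A[X]) : A[X]) = (r : A[X]) * x := rfl
      rw [this, coeff_mul]
      refine Ideal.sum_mem _ fun ⟨j, k⟩ e => ?_
      have e' := Finset.HasAntidiagonal.mem_antidiagonal.mp e
      simp only at e' ⊢
      have := Ideal.mul_mem_mul ((mem_reesAlgebra_iff I _).1 r.2 j) (hx k)
      rw [← pow_add] at this
      exact Ideal.pow_le_pow_right (by omega) this
  have hx : IsIntegral (reesAlgebra I) (monomial n a : A[X]) := by
    refine IsIntegral.of_pow (n := 2) (by norm_num) ?_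
    have : (monomial n a : A[X]) ^ 2 = algebraMap (reesAlgebra I) A[X] ⟨monomial (2 * n) (a ^ 2),
        reesAlgebra.monomial_mem.2 ha⟩ := by
      rw [monomial_pow, mul_comm]; rfl
    rw [this]
    exact isIntegral_algebraMap
  simpa using key ⟨_, hx⟩ n

theorem bound_domain (K A : Type*) [Field K] [CommRing A] [IsDomain A] [Algebra K A]
    [Algebra.FiniteType K A] (I : Ideal A) :
    ∃ c, ∀ n a, a ^ 2 ∈ I ^ (2 * n) → a ∈ I ^ (n - c) := by
  by_cases hI : I = ⊥
  · refine ⟨0, fun n a ha => ?_⟩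
    rcases Nat.eq_zero_or_pos n with rfl | hn
    · simp
    · subst hI
      rw [Ideal.bot_pow (by omega)] at ha
      have : a = 0 := by simpa using ha
      simp [this]
  obtain ⟨f, hfI, hf⟩ := Submodule.exists_mem_ne_zero_of_ne_bot hI
  have : IsNoetherianRing A := Algebra.FiniteType.isNoetherianRing K A
  have h1 : Algebra.FiniteType K (reesAlgebra I) := Algebra.FiniteType.trans (S := A) inferInstance inferInstance
  apply rees_bound
  let L := FractionRing A[X]
  have : IsFractionRing (reesAlgebra I) L := by
    refine IsFractionRing.of_field _ _ ?_
    intro z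
    obtain ⟨x, y, hy, rfl⟩ := IsFractionRing.div_surjective (A := A[X]) z
    have hmem : ∀ g : A[X], ∀ d, g.natDegree ≤ d → C (f ^ d) * g ∈ reesAlgebra I := by
      intro g d hd i
      rw [coeff_C_mul]
      by_cases hi : i ≤ d
      · exact Ideal.mul_mem_right _ _ (Ideal.pow_le_pow_right hi (Ideal.pow_mem_pow hfI d))
      · rw [coeff_eq_zero_of_natDegree_lt (by omega)]; simp
    refine ⟨⟨_, hmem x _ (le_max_left _ y.natDegree)⟩, ⟨_, hmem y _ (le_max_right x.natDegree _)⟩, ?_⟩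
    have e : ∀ r : reesAlgebra I, algebraMap (reesAlgebra I) L r = algebraMap A[X] L r := fun r => rfl
    have hC : algebraMap A[X] L (C (f ^ max x.natDegree y.natDegree)) ≠ 0 := by
      rw [Ne, FaithfulSMul.algebraMap_eq_zero_iff]
      simp [hf]
    rw [e, e, map_mul, map_mul, mul_div_mul_left _ _ hC]
  have h2 := N2 K (reesAlgebra I) L
  have hN : IsNoetherianRing (reesAlgebra I) := Algebra.FiniteType.isNoetherianRing K _
  have : IsNoetherian (reesAlgebra I) (integralClosure (reesAlgebra I) L) := isNoetherian_of_isNoetherianRing_of_finite (reesAlgebra I) (integralClosure (reesAlgebra I) L)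
  let φ : A[X] →ₐ[reesAlgebra I] L := IsScalarTower.toAlgHom _ _ _
  let ψ : integralClosure (reesAlgebra I) A[X] →ₗ[reesAlgebra I] integralClosure (reesAlgebra I) L :=
    (φ.toLinearMap.restrict (p := Subalgebra.toSubmodule (integralClosure (reesAlgebra I) A[X]))
      (q := Subalgebra.toSubmodule (integralClosure (reesAlgebra I) L)) (fun x hx => IsIntegral.map φ hx))
  refine Module.Finite.of_injective ψ ?_
  intro x y h
  have h3 : φ x = φ y := congrArg Subtype.val h
  exact Subtype.ext (FaithfulSMul.algebraMap_injective A[X] L h3)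

def QQ {R : Type*} [CommRing R] (I J : Ideal R) : Prop :=
  ∀ m, ∃ n, ∀ a, a ^ 2 ∈ J ⊔ I ^ n → a ∈ J ⊔ I ^ m

theorem QQ_prime (K R : Type*) [Field K] [CommRing R] [Algebra K R]
    [Algebra.FiniteType K R] (I J : Ideal R) [J.IsPrime] : QQ I J := by
  have : Algebra.FiniteType K (R ⧸ J) := .of_surjective (Ideal.Quotient.mkₐ K J) (Ideal.Quotient.mkₐ_surjective K J)
  obtain ⟨c, hc⟩ := bound_domain K (R ⧸ J) (I.map (Ideal.Quotient.mk J))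
  have hm : ∀ n a, a ∈ J ⊔ I ^ n ↔ Ideal.Quotient.mk J a ∈ (I.map (Ideal.Quotient.mk J)) ^ n := by
    intro n a
    rw [← Ideal.map_pow, ← Ideal.mem_comap, Ideal.comap_map_of_surjective _ Ideal.Quotient.mk_surjective,
      ← RingHom.ker_eq_comap_bot, Ideal.mk_ker, sup_comm]
  intro m
  refine ⟨2 * (m + c), fun a ha => ?_⟩
  rw [hm] at ha ⊢
  rw [map_pow] at ha
  simpa using hc _ _ ha

theorem artin_rees_aux {R : Type*} [CommRing R] [IsNoetherianRing R] (I J : Ideal R) :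
    ∃ k, ∀ m, I ^ (m + k) ⊓ J ≤ I ^ m * J := by
  obtain ⟨k, hk⟩ := Ideal.exists_pow_inf_eq_pow_smul I (M := R) J
  refine ⟨k, fun m => ?_⟩
  have h := hk (m + k) (Nat.le_add_left k m)
  rw [Nat.add_sub_cancel] at h
  intro x hx
  have hx' : x ∈ I ^ (m + k) • (⊤ : Submodule R R) ⊓ J := by
    refine Submodule.mem_inf.2 ⟨?_, (Submodule.mem_inf.1 hx).2⟩
    rw [smul_eq_mul, Ideal.mul_top]
    exact (Submodule.mem_inf.1 hx).1
  rw [h] at hx'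
  rw [← smul_eq_mul]
  exact Submodule.smul_mono le_rfl inf_le_right hx'

theorem QQ_inf {R : Type*} [CommRing R] [IsNoetherianRing R] (I J₁ J₂ : Ideal R)
    (h₁ : QQ I J₁) (h₂ : QQ I J₂) : QQ I (J₁ ⊓ J₂) := by
  intro m
  obtain ⟨k, hk⟩ := artin_rees_aux I (J₁ ⊔ J₂)
  obtain ⟨n₁, hn₁⟩ := h₁ (m + k)
  obtain ⟨n₂, hn₂⟩ := h₂ (m + k)
  refine ⟨max n₁ n₂, fun a ha => ?_⟩
  have l1 : J₁ ⊓ J₂ ⊔ I ^ max n₁ n₂ ≤ J₁ ⊔ I ^ n₁ :=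
    sup_le_sup inf_le_left (Ideal.pow_le_pow_right (le_max_left _ _))
  have l2 : J₁ ⊓ J₂ ⊔ I ^ max n₁ n₂ ≤ J₂ ⊔ I ^ n₂ :=
    sup_le_sup inf_le_right (Ideal.pow_le_pow_right (le_max_right _ _))
  obtain ⟨j1, hj1, e1, he1, h1⟩ := Submodule.mem_sup.1 (hn₁ a (l1 ha))
  obtain ⟨j2, hj2, e2, he2, h⟩ := Submodule.mem_sup.1 (hn₂ a (l2 ha))
  have h3 : j1 - j2 ∈ I ^ (m + k) ⊓ (J₁ ⊔ J₂) := by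
    refine Submodule.mem_inf.2 ⟨?_, sub_mem (Ideal.mem_sup_left hj1) (Ideal.mem_sup_right hj2)⟩
    have : j1 - j2 = e2 - e1 := by linear_combination h1 - h
    rw [this]
    exact sub_mem he2 he1
  have h4 : j1 - j2 ∈ I ^ m * J₁ ⊔ I ^ m * J₂ := by
    rw [← Ideal.mul_sup]
    exact hk m h3
  obtain ⟨i1, hi1, i2, hi2, h5⟩ := Submodule.mem_sup.1 h4
  have h6 : a = (j1 - i1) + (i1 + e1) := by rw [← h1]; ring
  have h7 : j1 - i1 = j2 + i2 := by linear_combination -h5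
  have h8 : j1 - i1 ∈ J₁ ⊓ J₂ := by
    refine Submodule.mem_inf.2 ⟨sub_mem hj1 ((Ideal.mul_le_right : I ^ m * J₁ ≤ J₁) hi1), ?_⟩
    rw [h7]
    exact add_mem hj2 ((Ideal.mul_le_right : I ^ m * J₂ ≤ J₂) hi2)
  rw [h6]
  exact Submodule.add_mem_sup h8
    (add_mem ((Ideal.mul_le_left : I ^ m * J₁ ≤ I ^ m) hi1)
      ((Ideal.pow_le_pow_right (Nat.le_add_right m k) : I ^ (m + k) ≤ I ^ m) he1))

theorem QQ_radical (K R : Type*) [Field K] [CommRing R] [Algebra K R]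
    [Algebra.FiniteType K R] (I J : Ideal R) (hJ : J.IsRadical) : QQ I J := by
  have : IsNoetherianRing R := Algebra.FiniteType.isNoetherianRing K R
  have hfin := J.finite_minimalPrimes_of_isNoetherianRing
  have e : J = hfin.toFinset.inf id := by
    rw [Finset.inf_id_eq_sInf, Set.Finite.coe_toFinset, Ideal.sInf_minimalPrimes, hJ.radical]
  rw [e]
  refine Finset.inf_induction (p := QQ I) ?_ (fun a ha b hb => QQ_inf I a b ha hb) ?_
  · intro m; exact ⟨0, fun a _ => by simp⟩
  · intro P hP
    have : P.IsPrime := ((Set.Finite.mem_toFinset _).1 hP).1.1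
    exact QQ_prime K R I P

theorem mem_map_of_eval {R : Type*} [CommRing R] [IsNoetherianRing R] (I J : Ideal R)
    (x : AdicCompletion I R)
    (h : ∀ m a, AdicCompletion.evalₐ I m x = Ideal.Quotient.mk _ a → a ∈ J ⊔ I ^ m) :
    x ∈ J.map (algebraMap R (AdicCompletion I R)) := by
  have hex := AdicCompletion.map_exact (I := I) (f := J.subtype) (g := J.mkQ)
    (Submodule.subtype_injective J) (LinearMap.exact_subtype_mkQ J) (Submodule.mkQ_surjective _)
  have hx : AdicCompletion.map I J.mkQ x = 0 := by
    induction x using AdicCompletion.induction_on with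
    | _ f =>
      ext n
      have h1 := h n (f n) (by rw [AdicCompletion.evalₐ_mk])
      rw [AdicCompletion.map_mk, AdicCompletion.mk_apply_coe]
      simp only [AdicCompletion.val_zero, Pi.zero_apply]
      rw [Submodule.mkQ_apply, Submodule.Quotient.mk_eq_zero]
      obtain ⟨j, hj, e, he, hje⟩ := Submodule.mem_sup.1 h1
      have h2 : (AdicCompletion.AdicCauchySequence.map I J.mkQ f) n = J.mkQ e := by
        have h3 : (AdicCompletion.AdicCauchySequence.map I J.mkQ f) n = J.mkQ (f n) := rfl
        rw [h3, ← hje, map_add, (J.mkQ_apply j), (Submodule.Quotient.mk_eq_zero J).2 hj, zero_add]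
      rw [h2]
      have h4 : J.mkQ e = e • J.mkQ 1 := by rw [← map_smul]; simp
      rw [h4]
      exact Submodule.smul_mem_smul he trivial
  obtain ⟨y, rfl⟩ := (hex x).1 hx
  obtain ⟨t, rfl⟩ := AdicCompletion.ofTensorProduct_surjective_of_finite I J y
  clear h hx hex
  induction t with
  | zero => simp
  | add x y hx hy => rw [map_add, map_add]; exact add_mem hx hy
  | tmul r j =>
    rw [AdicCompletion.ofTensorProduct_tmul, map_smul, smul_eq_mul, AdicCompletion.map_of]
    exact Ideal.mul_mem_left _ _ (Ideal.mem_map_of_mem (algebraMap R (AdicCompletion I R)) j.2)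

theorem isRadical_map (K R : Type*) [Field K] [CommRing R] [Algebra K R]
    [Algebra.FiniteType K R] (I J : Ideal R) (hJ : J.IsRadical) :
    (J.map (algebraMap R (AdicCompletion I R))).IsRadical := by
  have : IsNoetherianRing R := Algebra.FiniteType.isNoetherianRing K R
  rw [Ideal.isRadical_iff_pow_one_lt 2 (by norm_num)]
  intro x hx
  apply mem_map_of_eval
  intro m a ha
  obtain ⟨n, hn⟩ := QQ_radical K R I J hJ m
  induction x using AdicCompletion.induction_on with
  | _ f =>
  rw [AdicCompletion.evalₐ_mk] at ha
  have hb2 : (f (max n m)) ^ 2 ∈ J ⊔ I ^ (max n m) := by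
    have := Ideal.mem_map_of_mem (AdicCompletion.evalₐ I (max n m)).toRingHom hx
    rw [Ideal.map_map, map_pow] at this
    have e : (AdicCompletion.evalₐ I (max n m)).toRingHom.comp (algebraMap R (AdicCompletion I R))
      = Ideal.Quotient.mk _ := by
      ext r
      exact (AdicCompletion.evalₐ I (max n m)).commutes r
    rw [e] at this
    have e2 : (AdicCompletion.evalₐ I (max n m)).toRingHom (AdicCompletion.mk I R f) =
      Ideal.Quotient.mk _ (f (max n m)) := AdicCompletion.evalₐ_mk _ _ _
    rw [e2, ← map_pow, ← Ideal.mem_comap,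
      Ideal.comap_map_of_surjective _ Ideal.Quotient.mk_surjective,
      ← RingHom.ker_eq_comap_bot, Ideal.mk_ker] at this
    exact this
  have h1 := hn _ ((show J ⊔ I ^ max n m ≤ J ⊔ I ^ n from
    sup_le_sup le_rfl (Ideal.pow_le_pow_right (le_max_left _ _))) hb2)
  have h2 := AdicCompletion.Ideal.mk_eq_mk I (le_max_right n m) f
  rw [ha, Ideal.Quotient.eq] at h2
  have h3 : a = f (max n m) - (f (max n m) - a) := by ring
  rw [h3]
  exact sub_mem h1 (Ideal.mem_sup_right h2)


end Helpers

/-- Let `K` be a field, `R` a finitely generated commutative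
`K`-algebra, `I ⊆ R` an ideal and `R̂` the `I`-adic completion of `R`. Then for every
ideal `J ⊆ R` one has `√(J·R̂) = (√J)·R̂`; in particular, if `J` is a radical ideal,
then so is `J·R̂`. -/
theorem radical_map_adicCompletion
    (K : Type*) [Field K] (R : Type*) [CommRing R] [Algebra K R]
    [Algebra.FiniteType K R] (I : Ideal R) (J : Ideal R) :
    (J.map (algebraMap R (AdicCompletion I R))).radical
        = (J.radical).map (algebraMap R (AdicCompletion I R)) ∧
      (J.IsRadical → (J.map (algebraMap R (AdicCompletion I R))).IsRadical) := by
  refine ⟨le_antisymm ?_ (Ideal.map_radical_le _), isRadical_map K R I J⟩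
  rw [← (isRadical_map K R I _ J.radical_isRadical).radical]
  exact Ideal.radical_mono (Ideal.map_mono Ideal.le_radical)
end
end
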